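/- Derandomization of exactly computing semialgebraic circuits: There exists an absolute constant C > 0 with the following property. Let n, k, s, b ≥ 1 be integers, let F be a probabilistic b-semialgebraic circuit of size s with n deterministic input variables x ∈ ℝⁿ and k random input variables r ∈ ℝᵏ distributed according to a Borel probability measure μ on ℝᵏ, and let f : ℝⁿ → ℝ. Assume that F computes f, i.e., for every x ∈ ℝⁿ, μ{r ∈ ℝᵏ : F(x,r) = f(x)} ≥ 2/3. Then there exist an integer m with 1 ≤ m ≤ C·n²·s·(1 + ln(b·s)) and (not necessarily distinct) points r_1,…,r_m ∈ ℝᵏ such that for every x ∈ ℝⁿ strictly more than m/2 of the indices i ∈ {1,…,m} satisfy F(x,r_i) = f(x); in particular f(x) is the majority vote of F(x,r_1),…,F(x,r_m) for every x. -/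

import Mathlib

/-!
The claim is a uniform law of large numbers for the family of sets `{r | F (x, r) = z}`, indexed by
`(x, z) ∈ ℝⁿ × ℝ`: a sample of size `m` must hit each set of measure at least `2/3` more than `m/2`
times. As in Vapnik–Chervonenkis theory this follows from a bound on the number of traces of the
family on `2 m` points, by double sampling, random swaps between the two samples, and a Hoeffding
bound for each trace (`exists_uniform_sample`). Letting `z` range over all reals instead of taking
`z = f x` makes the family Borel although `f` is arbitrary. The event that some `(x, z)` is bad is then
only analytic, and is handled by compact approximation from inside
(`analyticSet_exists_isCompact`).

The number of traces on `M` points must be polynomial in `M` with exponent `O(n)`, and with a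
further factor of the form `(n s b) ^ O(n s)` independent of `M` (`card_patterns_le`). A trace is
determined by the signs of the polynomials describing the gates in the `M` computations, at the
point formed by `(x, z)` and the gate values. The gate values are extra variables, one block for
each of the `M` random inputs, determined by `x` and the sign pattern; no elimination of these
variables is performed. Each sign type is approximated by a compact cell
(`closedCell`), and in this cell the minimum over the `M` blocks of generically perturbed barrier
polynomials is maximized. At the maximum, the theorem of Carathéodory leaves only `n + 2` active blocks
(`exists_multipliers`), so the maximum is a solution of one of at most `(M + 1) ^ (n + 2)` square
polynomial systems in `O(n s)` unknowns (`critSystem`). For generic parameters such a system has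
only nondegenerate solutions, by Sard, and these are counted by a Bezout-type bound that is proved
by a dimension count (`card_nondegenerate_le`). Different sign types give different solutions, which
yields `card_types_le`.
-/

open MvPolynomial MeasureTheory

/-- A set `S ⊆ ℝ^N` is `t`-semialgebraic if there are `m ≤ t` polynomials of total degree
at most `t` whose sign patterns separate `S` from its complement. -/
def IsTSemialgebraic (N t : ℕ) (S : Set (Fin N → ℝ)) : Prop :=
  ∃ (m : ℕ) (p : Fin m → MvPolynomial (Fin N) ℝ),
    m ≤ t ∧ (∀ i, (p i).totalDegree ≤ t) ∧
    ∀ y ∈ S, ∀ y' ∉ S,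
      (fun i => Real.sign (eval y (p i))) ≠ (fun i => Real.sign (eval y' (p i)))

/-- A function `g : ℝ^l → ℝ` is `t`-semialgebraic if its graph, viewed as a subset of
`ℝ^{l+1}`, is `t`-semialgebraic. -/
def IsTSemialgebraicFun (l t : ℕ) (g : (Fin l → ℝ) → ℝ) : Prop :=
  IsTSemialgebraic (l + 1) t
    {w : Fin (l + 1) → ℝ | w (Fin.last l) = g (fun j => w j.castSucc)}

/-- `f : Fin s → ((Fin N → ℝ) → ℝ)` is a `b`-semialgebraic circuit of size `s` on `N` real
inputs: each `f i` is a `b`-semialgebraic gate applied to inputs, each of which is a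
coordinate projection, a constant, or an earlier function of the sequence. -/
def IsSACircuit (N s b : ℕ) (f : Fin s → (Fin N → ℝ) → ℝ) : Prop :=
  ∀ i : Fin s, ∃ (l : ℕ) (g : (Fin l → ℝ) → ℝ) (h : Fin l → (Fin N → ℝ) → ℝ),
    IsTSemialgebraicFun l b g ∧
    (∀ j : Fin l,
      (∃ u : Fin N, h j = fun x => x u) ∨
      (∃ cst : ℝ, h j = fun _ => cst) ∨
      (∃ i' : Fin s, i' < i ∧ h j = f i')) ∧
    f i = fun x => g (fun j => h j x)

/-! ### Nondegenerate solutions of polynomial systems -/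

/-- Lagrange interpolation polynomials for a finite set of points, with no control on the degree. -/
lemma exists_lagrange {ι : Type*} [Fintype ι] (A : Finset (ι → ℝ)) :
    ∃ L : (ι → ℝ) → MvPolynomial ι ℝ, ∀ a, ∀ b ∈ A,
      eval b (L a) = if b = a then 1 else 0 := by
  classical
  have h : ∀ a b : ι → ℝ, ∃ q : MvPolynomial ι ℝ, a ≠ b → (eval a q = 1 ∧ eval b q = 0) := by
    intro a b
    by_cases hab : a = b
    · exact ⟨0, fun h => absurd hab h⟩
    · obtain ⟨i, hi⟩ := Function.ne_iff.mp hab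
      refine ⟨C ((a i - b i)⁻¹) * (X i - C (b i)), fun _ => ⟨?_, ?_⟩⟩
      · have : a i - b i ≠ 0 := sub_ne_zero.mpr hi
        simp [this]
      · simp
  choose q hq using h
  refine ⟨fun a => ∏ b ∈ A.erase a, q a b, fun a b hb => ?_⟩
  split_ifs with hba
  · subst hba
    rw [map_prod]
    refine Finset.prod_eq_one fun c hc => ?_
    exact (hq b c (Finset.ne_of_mem_erase hc).symm).1
  · rw [map_prod]
    exact Finset.prod_eq_zero (Finset.mem_erase.mpr ⟨hba, hb⟩) (hq a b (Ne.symm hba)).2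

lemma contDiff_polyMap {ι κ : Type*} [Fintype ι] [Fintype κ] (p : κ → MvPolynomial ι ℝ) {n : WithTop ℕ∞} :
    ContDiff ℝ n (fun (x : ι → ℝ) (i : κ) => eval x (p i)) := by
  rw [contDiff_pi]
  intro i
  have h := AnalyticOnNhd.eval_mvPolynomial (𝕜 := ℝ) (p i)
  exact (AnalyticOnNhd.contDiff h)

/-- A linearly independent family of polynomials of total degree at most `E` has at most
`(E + 1) ^ |ι|` members. -/
lemma card_le_of_linearIndependent {ι κ : Type*} [Fintype ι] [Fintype κ] (E : ℕ)
    (v : κ → MvPolynomial ι ℝ) (hv : LinearIndependent ℝ v) (hE : ∀ k, (v k).totalDegree ≤ E) :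
    Fintype.card κ ≤ (E + 1) ^ Fintype.card ι := by
  classical
  let m : (ι → Fin (E + 1)) → MvPolynomial ι ℝ := fun α =>
    monomial (Finsupp.equivFunOnFinite.symm fun i => (α i : ℕ)) 1
  have hspan : Set.range v ≤ Submodule.span ℝ (Set.range m) := by
    rintro _ ⟨k, rfl⟩
    rw [(v k).as_sum]
    refine Submodule.sum_mem _ fun s hs => ?_
    have hsE : ∀ i, s i < E + 1 := fun i =>
      Nat.lt_succ_of_le (((Finsupp.le_degree i s).trans (le_totalDegree hs)).trans (hE k))
    have : monomial s (coeff s (v k)) = coeff s (v k) • m (fun i => ⟨s i, hsE i⟩) := by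
      simp only [m, smul_monomial, smul_eq_mul, mul_one]
      congr 2
      ext i
      rfl
    rw [this]
    exact Submodule.smul_mem _ _ (Submodule.subset_span ⟨_, rfl⟩)
  have h1 := linearIndependent_le_span' v hv (Set.range m) hspan
  rw [Cardinal.mk_fintype] at h1
  have h2 : Fintype.card κ ≤ Fintype.card (Set.range m) := by exact_mod_cast h1
  refine h2.trans ((Fintype.card_range_le m).trans ?_)
  simp

/-- A Bezout-type bound, proved by linear algebra: a square polynomial system `p = v` of degree at
most `D` in `N` unknowns has at most `(N D + 1) ^ N` nondegenerate solutions. With `L a` the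
Lagrange polynomials of the solution set and `d` a bound on their degrees, the `|A| (d + 1) ^ N`
polynomials `L a * ∏ i, p i ^ α i` with `α i ≤ d` are linearly independent: near each solution `p`
is a local diffeomorphism, so a linear relation among them can be solved for its coefficient
polynomials in `p`, which therefore vanish near `v`. Their degree is at most `(N D + 1) d`, and
comparing with the dimension of the space of polynomials of that degree gives the bound. -/
lemma card_nondegenerate_le {ι : Type*} [Fintype ι] (p : ι → MvPolynomial ι ℝ) (D : ℕ)
    (hD : ∀ i, (p i).totalDegree ≤ D) (v : ι → ℝ) (A : Finset (ι → ℝ))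
    (hA : ∀ a ∈ A, (fun i => eval a (p i)) = v)
    (hdet : ∀ a ∈ A, (fderiv ℝ (fun (x : ι → ℝ) (i : ι) => eval x (p i)) a).det ≠ 0) :
    A.card ≤ (Fintype.card ι * D + 1) ^ Fintype.card ι := by
  classical
  set f : (ι → ℝ) → ι → ℝ := fun x i => eval x (p i) with hf
  obtain ⟨L, hL⟩ := exists_lagrange A
  set d := A.sup fun a => (L a).totalDegree with hd
  let w : A × (ι → Fin (d + 1)) → MvPolynomial ι ℝ := fun k =>
    L k.1 * ∏ i, p i ^ (k.2 i : ℕ)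
  have hdeg : ∀ k, (w k).totalDegree ≤ Fintype.card ι * D * d + d := by
    intro k
    refine (totalDegree_mul _ _).trans ?_
    have h1 : (L k.1).totalDegree ≤ d := Finset.le_sup (f := fun a => (L a).totalDegree) k.1.2
    have h2 : (∏ i, p i ^ (k.2 i : ℕ)).totalDegree ≤ Fintype.card ι * D * d := by
      refine (totalDegree_finsetProd _ _).trans ?_
      have : ∀ i ∈ Finset.univ, (p i ^ (k.2 i : ℕ)).totalDegree ≤ d * D := fun i _ =>
        (totalDegree_pow _ _).trans (Nat.mul_le_mul (Nat.lt_succ_iff.mp (k.2 i).2) (hD i))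
      refine (Finset.sum_le_card_nsmul _ _ _ this).trans (le_of_eq ?_)
      simp [mul_assoc, mul_comm D d]
    omega
  have hlin : LinearIndependent ℝ w := by
    rw [Fintype.linearIndependent_iff]
    intro c hc
    let P : A → MvPolynomial ι ℝ := fun a => ∑ α : ι → Fin (d + 1),
      monomial (Finsupp.equivFunOnFinite.symm fun i => (α i : ℕ)) (c (a, α))
    have hP : ∀ a u, eval u (P a) = ∑ α : ι → Fin (d + 1), c (a, α) * ∏ i, u i ^ (α i : ℕ) := by
      intro a u
      simp [P, eval_monomial, Finsupp.prod_fintype]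
    have hid : ∀ x : ι → ℝ, ∑ a : A, eval x (L a) * eval (f x) (P a) = 0 := by
      intro x
      have := congrArg (eval x) hc
      rw [Fintype.sum_prod_type] at this
      simp only [map_sum, smul_eval, map_zero, w, map_mul, map_prod, map_pow] at this
      rw [← this]
      refine Finset.sum_congr rfl fun a _ => ?_
      rw [hP, Finset.mul_sum]
      refine Finset.sum_congr rfl fun α _ => ?_
      simp only [hf]; ring
    -- near `v` every value `u` has one preimage near each point of `A`
    have hnear : ∀ᶠ u in nhds v, ∀ a : A, ∃ x, f x = u ∧
        ∀ b : A, |eval x (L b) - (if b = a then 1 else 0)| < 1 / (A.card + 1 : ℝ) := by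
      rw [Filter.eventually_all]
      intro a
      have hst : HasStrictFDerivAt f (fderiv ℝ f a) a :=
        (contDiff_polyMap p (n := 1)).contDiffAt.hasStrictFDerivAt one_ne_zero
      have hmap := HasStrictFDerivAt.map_nhds_eq_of_equiv
        (f' := (fderiv ℝ f a).toContinuousLinearEquivOfDetNeZero (hdet a a.2)) hst
      have hfa : f a = v := hA a a.2
      rw [hfa] at hmap
      rw [← hmap, Filter.eventually_map]
      have : ∀ᶠ x in nhds (a : ι → ℝ),
          ∀ b : A, |eval x (L b) - (if b = a then 1 else 0)| < 1 / (A.card + 1 : ℝ) := by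
        rw [Filter.eventually_all]
        intro b
        have hcont : Continuous fun x : ι → ℝ => |eval x (L b) - (if b = a then 1 else 0)| :=
          ((MvPolynomial.continuous_eval (L b)).sub continuous_const).abs
        refine (hcont.tendsto (a : ι → ℝ)).eventually_lt_const ?_
        rw [hL b a a.2]
        have : ((a : ι → ℝ) = b) ↔ b = a := by rw [eq_comm, Subtype.ext_iff]
        simp only [this, sub_self, abs_zero]
        positivity
      filter_upwards [this] with x hx
      exact ⟨x, rfl, hx⟩
    have hzero : ∀ᶠ u in nhds v, ∀ a : A, eval u (P a) = 0 := by
      filter_upwards [hnear] with u hu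
      choose x hx hxL using hu
      -- The matrix of values of the Lagrange polynomials at the nearby preimages is close to the
      -- identity, hence diagonally dominant.
      let Mt : Matrix A A ℝ := fun a b => eval (x a) (L b)
      have hMt : Mt.det ≠ 0 := by
        apply det_ne_zero_of_sum_row_lt_diag
        intro a
        have hc0 : (0:ℝ) < A.card + 1 := by positivity
        have h1 : ∑ b ∈ Finset.univ.erase a, ‖Mt a b‖ ≤
            (Finset.univ.erase a).card • (1 / (A.card + 1 : ℝ)) := by
          refine Finset.sum_le_card_nsmul _ _ _ fun b hb => ?_
          have := hxL a b
          rw [if_neg (Finset.ne_of_mem_erase hb), sub_zero] at this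
          exact this.le
        have h2 : (Finset.univ.erase a).card = A.card - 1 := by
          rw [Finset.card_erase_of_mem (Finset.mem_univ _)]; simp
        have hpos : 1 ≤ A.card := Finset.card_pos.mpr ⟨a, a.2⟩
        have h3 := hxL a a
        rw [if_pos rfl, abs_lt] at h3
        have h4 : 1 - 1 / (A.card + 1 : ℝ) < ‖Mt a a‖ := by
          refine lt_of_lt_of_le ?_ (le_abs_self _)
          show _ < eval (x a) (L a)
          linarith [h3.1]
        refine lt_of_le_of_lt h1 (lt_of_le_of_lt ?_ h4)
        rw [h2, nsmul_eq_mul, Nat.cast_sub hpos]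
        field_simp
        push_cast
        linarith
      have hmv : Mt.mulVec (fun b => eval u (P b)) = 0 := by
        ext a
        have := hid (x a)
        rw [hx a] at this
        simpa [Matrix.mulVec, dotProduct, Mt] using this
      have := Matrix.eq_zero_of_mulVec_eq_zero hMt hmv
      exact fun a => congrFun this a
    have hPz : ∀ a, P a = 0 := by
      intro a
      obtain ⟨ε, hε, hball⟩ := Metric.eventually_nhds_iff_ball.mp hzero
      refine MvPolynomial.funext_set (fun i => Metric.ball (v i) ε) (fun i => ?_) fun u hu => ?_
      · rw [Real.ball_eq_Ioo]
        exact Set.Ioo_infinite (by linarith)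
      · rw [map_zero]
        refine hball u ?_ a
        rw [ball_pi _ hε]
        exact hu
    rintro ⟨a, α⟩
    have := congrArg (coeff (Finsupp.equivFunOnFinite.symm fun i => (α i : ℕ))) (hPz a)
    simp only [P, coeff_sum, coeff_monomial, coeff_zero] at this
    rw [Finset.sum_eq_single α] at this
    · simpa using this
    · intro β _ hβ
      rw [if_neg]
      intro h
      apply hβ
      have := Finsupp.equivFunOnFinite.symm.injective h
      funext i
      exact Fin.ext (congrFun this i)
    · simp
  have hcard := card_le_of_linearIndependent _ w hlin hdeg
  rw [Fintype.card_prod, Fintype.card_fun, Fintype.card_coe, Fintype.card_fin] at hcard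
  have hE : Fintype.card ι * D * d + d + 1 ≤ (Fintype.card ι * D + 1) * (d + 1) := by ring_nf; omega
  have h2 := hcard.trans (Nat.pow_le_pow_left hE _)
  rw [mul_pow] at h2
  exact Nat.le_of_mul_le_mul_right h2 (by positivity)

/-- By Sard, almost every fibre of a square polynomial map has only nondegenerate points. -/
lemma ae_card_fiber_le {ι : Type*} [Fintype ι] (p : ι → MvPolynomial ι ℝ) (D : ℕ)
    (hD : ∀ i, (p i).totalDegree ≤ D) :
    ∃ S : Set (ι → ℝ), volume S = 0 ∧ ∀ v ∉ S, ∀ A : Finset (ι → ℝ),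
      (∀ a ∈ A, (fun i => eval a (p i)) = v) →
        A.card ≤ (Fintype.card ι * D + 1) ^ Fintype.card ι := by
  set f : (ι → ℝ) → ι → ℝ := fun x i => eval x (p i) with hf
  refine ⟨f '' {x | (fderiv ℝ f x).det = 0}, ?_, ?_⟩
  · refine addHaar_image_eq_zero_of_det_fderivWithin_eq_zero volume (f' := fun x => fderiv ℝ f x) ?_ ?_
    · intro x _
      exact ((contDiff_polyMap p (n := 1)).differentiable one_ne_zero x).hasFDerivAt.hasFDerivWithinAt
    · exact fun x hx => hx
  · intro v hv A hA
    refine card_nondegenerate_le p D hD v A hA fun a ha h0 => hv ⟨a, h0, hA a ha⟩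

/-- The fibre bound when the right-hand side consists of some of the coordinates of a longer
parameter vector `θ`, so that many systems can share one generic parameter. -/
lemma ae_card_system_le {ι κ' κ : Type*} [Fintype ι] [Fintype κ'] [Fintype κ]
    (hc : Fintype.card ι = Fintype.card κ') (emb : κ' → κ) (hemb : Function.Injective emb)
    (p : κ' → MvPolynomial ι ℝ) (D : ℕ) (hD : ∀ k, (p k).totalDegree ≤ D) :
    ∀ᵐ θ : κ → ℝ, ∀ A : Finset (ι → ℝ), (∀ a ∈ A, ∀ k, eval a (p k) = θ (emb k)) →
      A.card ≤ (Fintype.card ι * D + 1) ^ Fintype.card ι := by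
  let e : ι ≃ κ' := Fintype.equivOfCardEq hc
  obtain ⟨S, hS, hSA⟩ := ae_card_fiber_le (fun i => p (e i)) D (fun i => hD _)
  let L : (κ → ℝ) →ₗ[ℝ] (ι → ℝ) := LinearMap.funLeft ℝ ℝ (emb ∘ e)
  have hL : Function.Surjective L :=
    LinearMap.funLeft_surjective_of_injective ℝ ℝ _ (hemb.comp e.injective)
  have h := (ae_comp_linearMap_mem_iff (𝕜 := ℝ) L (volume : Measure (κ → ℝ))
    (volume : Measure (ι → ℝ)) hL (measurableSet_toMeasurable volume S).compl).mpr (by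
      rw [ae_iff]
      simpa using (measure_toMeasurable S).trans hS)
  filter_upwards [h] with θ hθ A hA
  refine hSA (L θ) (fun hmem => hθ (subset_toMeasurable _ _ hmem)) A fun a ha => ?_
  funext i
  exact hA a ha (e i)

/-! ### First-order conditions for a max-min -/

lemma hasDerivAt_eval_line {ι : Type*} [Fintype ι] (q : MvPolynomial ι ℝ) (v e : ι → ℝ) :
    HasDerivAt (fun t : ℝ => eval (v + t • e) q) (∑ a, e a * eval v (pderiv a q)) 0 := by
  classical
  induction q using MvPolynomial.induction_on with
  | C r => simpa using hasDerivAt_const (0 : ℝ) r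
  | add p q hp hq =>
    have := hp.add hq
    simp only [map_add, mul_add, Finset.sum_add_distrib]
    exact this
  | mul_X p i hp =>
    have h2 : HasDerivAt (fun t : ℝ => (v + t • e) i) (e i) 0 := by
      have := ((hasDerivAt_id (0 : ℝ)).mul_const (e i)).const_add (v i)
      simpa using this
    have := hp.mul h2
    simp only [map_mul, eval_X]
    refine this.congr_deriv ?_
    simp only [Derivation.leibniz, smul_eq_mul, map_add, map_mul, eval_X, pderiv_X, zero_smul,
      add_zero, mul_add, Finset.sum_add_distrib, Pi.single_apply]
    rw [add_comm]
    congr 1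
    · rw [Finset.sum_eq_single i]
      · simp; ring
      · intro b _ hb
        simp [hb.symm]
      · simp
    · simp [Finset.sum_mul]
      exact Finset.sum_congr rfl fun _ _ => by ring

lemma eventually_lt_of_hasDerivAt_pos {f : ℝ → ℝ} {f' : ℝ} (h : HasDerivAt f f' 0) (hf' : 0 < f') :
    ∀ᶠ t in nhdsWithin (0 : ℝ) (Set.Ioi 0), f 0 < f t := by
  have h1 := (h.tendsto_slope.mono_left
    (nhdsWithin_mono (0 : ℝ) (fun x (hx : x ∈ Set.Ioi (0 : ℝ)) => ne_of_gt hx))).eventually_const_lt hf'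
  filter_upwards [h1, self_mem_nhdsWithin] with t ht ht0
  have ht0' : 0 < t := ht0
  rw [slope_def_field, sub_zero] at ht
  have := (div_pos_iff_of_pos_right ht0').mp ht
  linarith

section
variable {α β I : Type*} [Fintype α] [Fintype β] [Fintype I]

/-- The polynomial `Q` in the variables `(y, w) : (α ⊕ β) → ℝ` perturbed by an affine function, with
linear part `ζ` in `y` and `η` in `w`, and constant term `τ`. -/
noncomputable def tilted (Q : MvPolynomial (α ⊕ β) ℝ) (η : β → ℝ) (τ : ℝ) (ζ : α → ℝ)
    (v : α ⊕ β → ℝ) : ℝ :=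
  eval v Q - (∑ a, η a * v (.inr a) + τ + ∑ b, ζ b * v (.inl b))

lemma continuous_tilted (Q : MvPolynomial (α ⊕ β) ℝ) (η : β → ℝ) (τ : ℝ) (ζ : α → ℝ) :
    Continuous (tilted Q η τ ζ) := by
  unfold tilted
  have := MvPolynomial.continuous_eval Q
  fun_prop

lemma hasDerivAt_tilted_line (Q : MvPolynomial (α ⊕ β) ℝ) (η : β → ℝ) (τ : ℝ) (ζ : α → ℝ)
    (v e : α ⊕ β → ℝ) :
    HasDerivAt (fun t : ℝ => tilted Q η τ ζ (v + t • e))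
      (∑ b, (eval v (pderiv (.inl b) Q) - ζ b) * e (.inl b)
        + ∑ a, (eval v (pderiv (.inr a) Q) - η a) * e (.inr a)) 0 := by
  have h1 := hasDerivAt_eval_line Q v e
  have h2 : ∀ c, HasDerivAt (fun t : ℝ => (v + t • e) c) (e c) 0 := fun c => by
    have := ((hasDerivAt_id (0 : ℝ)).mul_const (e c)).const_add (v c)
    simpa using this
  have h3 : HasDerivAt (fun t : ℝ => ∑ a, η a * (v + t • e) (.inr a)) (∑ a, η a * e (.inr a)) 0 :=
    HasDerivAt.fun_sum fun a _ => (h2 (.inr a)).const_mul _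
  have h4 : HasDerivAt (fun t : ℝ => ∑ b, ζ b * (v + t • e) (.inl b)) (∑ b, ζ b * e (.inl b)) 0 :=
    HasDerivAt.fun_sum fun b _ => (h2 (.inl b)).const_mul _
  refine (h1.sub ((h3.add_const τ).add h4)).congr_deriv ?_
  rw [Fintype.sum_sum_type]
  simp only [sub_mul, Finset.sum_sub_distrib]
  have e1 : ∀ b, e (.inl b) * eval v (pderiv (.inl b) Q) = eval v (pderiv (.inl b) Q) * e (.inl b) :=
    fun b => mul_comm _ _
  have e2 : ∀ b, e (.inr b) * eval v (pderiv (.inr b) Q) = eval v (pderiv (.inr b) Q) * e (.inr b) :=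
    fun b => mul_comm _ _
  simp only [e1, e2]
  ring

/-- First-order conditions for a local maximum of `min_i (Q i - affine)(y, W i)`, where the variables
`y` are shared and each index `i` has its own block `W i`. If `0` were not in the convex hull of the
`y`-gradients of the active indices with vanishing `w`-gradient, a separating direction would
increase all active functions at once. Carathéodory bounds the number of indices involved by
`|α| + 1`; this is what keeps the number of equations independent of `|I|`. -/
lemma exists_multipliers (Q : I → MvPolynomial (α ⊕ β) ℝ) (η : I → β → ℝ) (τ : I → ℝ) (ζ : α → ℝ)
    (y : α → ℝ) (W : I → β → ℝ) (t : ℝ)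
    (ht : ∀ i, t ≤ tilted (Q i) (η i) (τ i) ζ (Sum.elim y (W i)))
    (hloc : ∀ᶠ z : (α → ℝ) × (I → β → ℝ) in nhds (y, W),
      ∃ i, tilted (Q i) (η i) (τ i) ζ (Sum.elim z.1 (z.2 i)) ≤ t) :
    ∃ (J : Finset I) (l : I → ℝ), J.card ≤ Fintype.card α + 1 ∧ ∑ i ∈ J, l i = 1 ∧
      (∀ i ∈ J, tilted (Q i) (η i) (τ i) ζ (Sum.elim y (W i)) = t) ∧
      (∀ i ∈ J, ∀ a, eval (Sum.elim y (W i)) (pderiv (.inr a) (Q i)) = η i a) ∧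
      ∀ b, ∑ i ∈ J, l i * eval (Sum.elim y (W i)) (pderiv (.inl b) (Q i)) = ζ b := by
  classical
  let g : I → β → ℝ := fun i a => eval (Sum.elim y (W i)) (pderiv (.inr a) (Q i)) - η i a
  let G : I → α → ℝ := fun i b => eval (Sum.elim y (W i)) (pderiv (.inl b) (Q i)) - ζ b
  let crit : Set I := {i | tilted (Q i) (η i) (τ i) ζ (Sum.elim y (W i)) = t ∧ ∀ a, g i a = 0}
  have h0 : (0 : α → ℝ) ∈ convexHull ℝ (G '' crit) := by
    by_contra hnot
    have hfin : (G '' crit).Finite := Set.toFinite _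
    obtain ⟨f, u, hu0, hu⟩ := geometric_hahn_banach_point_closed (convex_convexHull ℝ (G '' crit))
      (hfin.isClosed_convexHull (𝕜 := ℝ)) hnot
    rw [map_zero] at hu0
    let d : α → ℝ := fun b => f (Pi.single b 1)
    have hfd : ∀ x : α → ℝ, f x = ∑ b, x b * d b := by
      intro x
      conv_lhs => rw [pi_eq_sum_univ' x]
      rw [map_sum]
      refine Finset.sum_congr rfl fun b _ => ?_
      rw [map_smul, smul_eq_mul]
    -- For an active index with nonzero `w`-gradient, moving along that gradient with a large
    -- enough coefficient `c i` outweighs the change caused by moving `y` in direction `d`.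
    let c : I → ℝ := fun i => (|∑ b, G i b * d b| + 1) / ∑ a, g i a ^ 2
    let e : I → α ⊕ β → ℝ := fun i => Sum.elim d fun a => c i * g i a
    have hpos : ∀ i, tilted (Q i) (η i) (τ i) ζ (Sum.elim y (W i)) = t →
        0 < ∑ b, G i b * d b + ∑ a, g i a * (c i * g i a) := by
      intro i hi
      by_cases hg : ∀ a, g i a = 0
      · have := hu (G i) (subset_convexHull ℝ _ ⟨i, ⟨hi, hg⟩, rfl⟩)
        rw [hfd] at this
        simp only [hg, zero_mul, Finset.sum_const_zero, add_zero]
        linarith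
      · push Not at hg
        obtain ⟨a, ha⟩ := hg
        have hS : 0 < ∑ a, g i a ^ 2 :=
          Finset.sum_pos' (fun _ _ => sq_nonneg _) ⟨a, Finset.mem_univ _, by positivity⟩
        have : ∑ a, g i a * (c i * g i a) = |∑ b, G i b * d b| + 1 := by
          have : ∑ a, g i a * (c i * g i a) = c i * ∑ a, g i a ^ 2 := by
            rw [Finset.mul_sum]
            exact Finset.sum_congr rfl fun _ _ => by ring
          rw [this]
          exact div_mul_cancel₀ _ hS.ne'
        rw [this]
        linarith [neg_abs_le (∑ b, G i b * d b)]
    have hE : ∀ i, ∀ᶠ r in nhdsWithin (0 : ℝ) (Set.Ioi 0),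
        t < tilted (Q i) (η i) (τ i) ζ (Sum.elim y (W i) + r • e i) := by
      intro i
      rcases (ht i).eq_or_lt with hi | hi
      · have h1 := hasDerivAt_tilted_line (Q i) (η i) (τ i) ζ (Sum.elim y (W i)) (e i)
        have h2 := eventually_lt_of_hasDerivAt_pos h1 (hpos i hi.symm)
        simpa [← hi] using h2
      · have hcont : Continuous fun r : ℝ =>
            tilted (Q i) (η i) (τ i) ζ (Sum.elim y (W i) + r • e i) :=
          (continuous_tilted _ _ _ _).comp (by fun_prop)
        have := (hcont.tendsto 0).eventually_const_lt (u := t) (by simpa using hi)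
        exact this.filter_mono nhdsWithin_le_nhds
    have hE' := Filter.eventually_all.mpr hE
    have hcont : Continuous fun r : ℝ =>
        ((y + r • d, fun i => W i + r • fun a => c i * g i a) : (α → ℝ) × (I → β → ℝ)) := by
      fun_prop
    have hl : ∀ᶠ r in nhdsWithin (0 : ℝ) (Set.Ioi 0), ∃ i, tilted (Q i) (η i) (τ i) ζ
        (Sum.elim (y + r • d) (W i + r • fun a => c i * g i a)) ≤ t := by
      have h1 := hcont.tendsto 0
      simp only [zero_smul, add_zero] at h1
      exact (h1.eventually hloc).filter_mono nhdsWithin_le_nhds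
    obtain ⟨r, hr1, i, hr2⟩ := (hE'.and hl).exists
    have hsame : (Sum.elim (y + r • d) (W i + r • fun a => c i * g i a) : α ⊕ β → ℝ)
        = Sum.elim y (W i) + r • e i := by
      funext x; rcases x with x | x <;> simp [e]
    rw [hsame] at hr2
    exact absurd hr2 (not_le.mpr (hr1 i))
  obtain ⟨κ, hκ, z, w, hz, haff, hw, hw1, hwz⟩ := eq_pos_convex_span_of_mem_convexHull h0
  have hch : ∀ k, ∃ i ∈ crit, G i = z k := fun k => hz ⟨k, rfl⟩
  choose φ hφ hφG using hch
  have hinj : Function.Injective φ := by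
    intro k k' h
    apply haff.injective
    rw [← hφG, ← hφG, h]
  have hcard : Fintype.card κ ≤ Fintype.card α + 1 := by
    have h1 := haff.card_le_finrank_succ
    have h2 := Submodule.finrank_le (vectorSpan ℝ (Set.range z))
    rw [Module.finrank_fintype_fun_eq_card] at h2
    omega
  have hsum : ∀ F : I → ℝ, ∑ i ∈ Finset.univ.image φ, (∑ k, if φ k = i then w k else 0) * F i
      = ∑ k, w k * F (φ k) := by
    intro F
    rw [Finset.sum_image (fun a _ b _ h => hinj h)]
    refine Finset.sum_congr rfl fun k _ => ?_
    rw [Finset.sum_eq_single k]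
    · simp
    · intro k' _ hk'
      rw [if_neg (fun h => hk' (hinj h))]
    · simp
  refine ⟨Finset.univ.image φ, fun i => ∑ k, if φ k = i then w k else 0, ?_, ?_, ?_, ?_, ?_⟩
  · rw [Finset.card_image_of_injective _ hinj]; exact hcard
  · simpa [hw1] using hsum fun _ => 1
  · intro i hi
    obtain ⟨k, _, rfl⟩ := Finset.mem_image.mp hi
    exact (hφ k).1
  · intro i hi a
    obtain ⟨k, _, rfl⟩ := Finset.mem_image.mp hi
    exact sub_eq_zero.mp ((hφ k).2 a)
  · intro b
    rw [hsum]
    have h1 := congrFun hwz b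
    simp only [← hφG, Finset.sum_apply, Pi.smul_apply, smul_eq_mul, Pi.zero_apply, G, mul_sub,
      Finset.sum_sub_distrib, ← Finset.sum_mul, hw1, one_mul] at h1
    linarith
end

/-! ### Cells, barriers and critical points -/

section
set_option linter.unusedSectionVars false
variable {α β γ I : Type*} [Fintype α] [Fintype β] [Fintype γ] [Fintype I]

/-- A nonnegative polynomial that vanishes on the boundary of every `closedCell p a R δ ε`: on the
sphere of squared radius `R`, and where some `p c` equals `±δ` or `±ε`. -/
noncomputable def barrier (p : γ → MvPolynomial (α ⊕ β) ℝ) (R δ ε : ℝ) : MvPolynomial (α ⊕ β) ℝ :=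
  (C R - ∑ a, X a ^ 2) ^ 2 * ∏ c, ((p c ^ 2 - C (δ ^ 2)) * (p c ^ 2 - C (ε ^ 2))) ^ 2

lemma eval_barrier (p : γ → MvPolynomial (α ⊕ β) ℝ) (R δ ε : ℝ) (v : α ⊕ β → ℝ) :
    eval v (barrier p R δ ε) = (R - ∑ a, v a ^ 2) ^ 2 *
      ∏ c, ((eval v (p c) ^ 2 - δ ^ 2) * (eval v (p c) ^ 2 - ε ^ 2)) ^ 2 := by
  simp [barrier, map_prod]

lemma totalDegree_barrier_le (p : γ → MvPolynomial (α ⊕ β) ℝ) (R δ ε : ℝ) (D : ℕ)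
    (hD : ∀ c, (p c).totalDegree ≤ D) :
    (barrier p R δ ε).totalDegree ≤ 4 + 8 * D * Fintype.card γ := by
  unfold barrier
  have h1 : ((C R - ∑ a, X a ^ 2 : MvPolynomial (α ⊕ β) ℝ) ^ 2).totalDegree ≤ 4 := by
    have : (C R - ∑ a, X a ^ 2 : MvPolynomial (α ⊕ β) ℝ).totalDegree ≤ 2 := by
      refine (totalDegree_sub _ _).trans (max_le (by simp) ?_)
      exact totalDegree_finsetSum_le fun a _ => by simp
    exact (totalDegree_pow _ _).trans (by omega)
  have h2 : ∀ c, (((p c ^ 2 - C (δ ^ 2)) * (p c ^ 2 - C (ε ^ 2))) ^ 2).totalDegree ≤ 8 * D := by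
    intro c
    have h3 : ∀ r : ℝ, (p c ^ 2 - C r).totalDegree ≤ 2 * D := fun r =>
      (totalDegree_sub_C_le _ _).trans
        ((totalDegree_pow _ _).trans (Nat.mul_le_mul_left 2 (hD c)))
    have h4 := (totalDegree_mul _ _).trans (add_le_add (h3 (δ ^ 2)) (h3 (ε ^ 2)))
    exact (totalDegree_pow _ _).trans (by omega)
  have h5 : (∏ c, ((p c ^ 2 - C (δ ^ 2)) * (p c ^ 2 - C (ε ^ 2))) ^ 2).totalDegree
      ≤ 8 * D * Fintype.card γ := by
    refine (totalDegree_finsetProd _ _).trans ?_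
    refine (Finset.sum_le_card_nsmul _ _ _ fun c _ => h2 c).trans (le_of_eq ?_)
    simp [mul_comm]
  exact (totalDegree_mul _ _).trans (add_le_add h1 h5)

/-- The critical point equations of `min_{i ∈ J} (Q i - affine)`, as a square polynomial system whose
right-hand side is the vector of perturbation parameters. The unknowns are `y`, the blocks `W i`,
the multipliers, and the critical value. The equations read, in order: `∂Q i / ∂w = η i`;
`Q i - ⟨W i, ∂Q i / ∂w⟩ - t = τ i`; `∑ λ i ∂Q i / ∂y = ζ`; `∑ λ i = ρ`. The multipliers are scaled
by the parameter `ρ` (instead of being normalized to `1`) so that all right-hand sides are free. -/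
noncomputable def critSystem (Q : I → MvPolynomial (α ⊕ β) ℝ) (J : Finset I) :
    (J × β) ⊕ J ⊕ α ⊕ Unit → MvPolynomial (α ⊕ (J × β) ⊕ J ⊕ Unit) ℝ :=
  let ren : J → MvPolynomial (α ⊕ β) ℝ → MvPolynomial (α ⊕ (J × β) ⊕ J ⊕ Unit) ℝ := fun i =>
    rename (Sum.elim Sum.inl fun a => Sum.inr (Sum.inl (i, a)))
  Sum.elim (fun ia => ren ia.1 (pderiv (.inr ia.2) (Q ia.1))) <|
  Sum.elim (fun i => ren i (Q i - ∑ a, X (.inr a) * pderiv (.inr a) (Q i))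
    - X (.inr (.inr (.inr ())))) <|
  Sum.elim (fun b => ∑ i, X (.inr (.inr (.inl i))) * ren i (pderiv (.inl b) (Q i))) <|
  fun _ => ∑ i, X (.inr (.inr (.inl i)))

lemma totalDegree_pderiv_le {ι : Type*} (q : MvPolynomial ι ℝ) (i : ι) :
    (pderiv i q).totalDegree ≤ q.totalDegree := by
  classical
  conv_lhs => rw [q.as_sum, map_sum]
  refine totalDegree_finsetSum_le fun s hs => ?_
  rw [pderiv_monomial]
  refine (totalDegree_monomial_le _ _).trans (le_trans ?_ (le_totalDegree hs))
  exact Finsupp.degree_mono tsub_le_self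

lemma totalDegree_critSystem_le (Q : I → MvPolynomial (α ⊕ β) ℝ) (J : Finset I) (D : ℕ)
    (hD : ∀ i, (Q i).totalDegree ≤ D) (k) : (critSystem Q J k).totalDegree ≤ D + 1 := by
  have hp : ∀ i a, (pderiv a (Q i)).totalDegree ≤ D := fun i a =>
    (totalDegree_pderiv_le _ _).trans (hD i)
  rcases k with ⟨i, a⟩ | i | b | _
  · exact (totalDegree_rename_le _ _).trans ((hp _ _).trans (Nat.le_succ _))
  · refine (totalDegree_sub _ _).trans (max_le ((totalDegree_rename_le _ _).trans ?_) (by simp))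
    refine (totalDegree_sub _ _).trans (max_le ((hD _).trans (Nat.le_succ _)) ?_)
    refine totalDegree_finsetSum_le fun a _ => ?_
    exact (totalDegree_mul _ _).trans (by rw [totalDegree_X]; have := hp i (.inr a); omega)
  · refine totalDegree_finsetSum_le fun i _ => ?_
    refine (totalDegree_mul _ _).trans ?_
    rw [totalDegree_X]
    have := (totalDegree_rename_le (R := ℝ)
      (Sum.elim Sum.inl fun a => Sum.inr (Sum.inl (i, a)) : α ⊕ β → α ⊕ (J × β) ⊕ J ⊕ Unit)
      (pderiv (.inl b) (Q i))).trans (hp _ _)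
    exact (Nat.add_le_add_left this 1).trans (by omega)
  · exact totalDegree_finsetSum_le fun i _ => by rw [totalDegree_X]; omega

lemma isClosed_imp_const {X : Type*} [TopologicalSpace X] {P : Prop} {q : X → Prop}
    (h : P → IsClosed {x | q x}) : IsClosed {x | P → q x} := by
  by_cases hP : P
  · simpa [hP] using h hP
  · simp [hP]

/-- A compact approximation of the set of points where the polynomials `p c` have the signs of the
reals `a c`: inside a ball of squared radius `R`, vanishing is relaxed to `|p c| ≤ δ` and strict
positivity (negativity) is tightened to `p c ≥ ε` (`p c ≤ -ε`). -/
def closedCell (p : γ → MvPolynomial (α ⊕ β) ℝ) (a : γ → ℝ) (R δ ε : ℝ) : Set (α ⊕ β → ℝ) :=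
  {v | ∑ x, v x ^ 2 ≤ R ∧ ∀ c, (a c = 0 → |eval v (p c)| ≤ δ) ∧ (0 < a c → ε ≤ eval v (p c)) ∧
    (a c < 0 → eval v (p c) ≤ -ε)}

lemma isClosed_closedCell (p : γ → MvPolynomial (α ⊕ β) ℝ) (a : γ → ℝ) (R δ ε : ℝ) :
    IsClosed (closedCell p a R δ ε) := by
  have hp : ∀ c, Continuous fun v => eval v (p c) := fun c => MvPolynomial.continuous_eval _
  refine IsClosed.and (isClosed_le (by fun_prop) continuous_const) ?_
  simp only [Set.ofPred_forall]
  refine isClosed_iInter fun c => IsClosed.and ?_ (IsClosed.and ?_ ?_)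
  · exact isClosed_imp_const fun _ => isClosed_le (hp c).abs continuous_const
  · exact isClosed_imp_const fun _ => isClosed_le continuous_const (hp c)
  · exact isClosed_imp_const fun _ => isClosed_le (hp c) continuous_const

/-- A point of a closed cell with nonzero barrier is interior to the cell. -/
lemma eventually_mem_closedCell (p : γ → MvPolynomial (α ⊕ β) ℝ) (a : γ → ℝ) (R δ ε : ℝ)
    (v : α ⊕ β → ℝ) (hv : v ∈ closedCell p a R δ ε) (hb : eval v (barrier p R δ ε) ≠ 0) :
    ∀ᶠ v' in nhds v, v' ∈ closedCell p a R δ ε := by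
  rw [eval_barrier, mul_ne_zero_iff, Finset.prod_ne_zero_iff] at hb
  obtain ⟨h1, h2⟩ := hb
  have hp : ∀ c, Continuous fun v => eval v (p c) := fun c => MvPolynomial.continuous_eval _
  have hS : Continuous fun v : α ⊕ β → ℝ => ∑ x, v x ^ 2 := by fun_prop
  refine Filter.Eventually.and ?_ (Filter.eventually_all.mpr fun c => ?_)
  · have : ∑ x, v x ^ 2 < R := lt_of_le_of_ne hv.1 fun h => h1 (by rw [h]; ring)
    exact ((hS.tendsto v).eventually_lt_const this).mono fun _ h => h.le
  · obtain ⟨k1, k2, k3⟩ := hv.2 c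
    have h3 := h2 c (Finset.mem_univ _)
    refine Filter.Eventually.and ?_ (Filter.Eventually.and ?_ ?_)
    · by_cases h0 : a c = 0
      · have : |eval v (p c)| < δ := lt_of_le_of_ne (k1 h0) fun h => h3 (by rw [← h, sq_abs]; ring)
        exact (((hp c).abs.tendsto v).eventually_lt_const this).mono fun _ h _ => h.le
      · exact Filter.Eventually.of_forall fun _ h => absurd h h0
    · by_cases h0 : 0 < a c
      · have : ε < eval v (p c) := lt_of_le_of_ne (k2 h0) fun h => h3 (by rw [← h]; ring)
        exact (((hp c).tendsto v).eventually_const_lt this).mono fun _ h _ => h.le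
      · exact Filter.Eventually.of_forall fun _ h => absurd h h0
    · by_cases h0 : a c < 0
      · have : eval v (p c) < -ε := lt_of_le_of_ne (k3 h0) fun h => h3 (by rw [h]; ring)
        exact (((hp c).tendsto v).eventually_lt_const this).mono fun _ h _ => h.le
      · exact Filter.Eventually.of_forall fun _ h => absurd h h0

lemma abs_le_sqrt_of_sum_sq_le {ι : Type*} [Fintype ι] {v : ι → ℝ} {R : ℝ}
    (h : ∑ x, v x ^ 2 ≤ R) (x : ι) : |v x| ≤ √R := by
  apply Real.abs_le_sqrt
  exact (Finset.single_le_sum (f := fun x => v x ^ 2) (fun _ _ => sq_nonneg _)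
    (Finset.mem_univ x)).trans h

lemma sign_eq_of_mem_cell {a x ε : ℝ} (hε : 0 < ε)
    (h0 : a = 0 → x = 0) (h1 : 0 < a → ε ≤ x) (h2 : a < 0 → x ≤ -ε) :
    Real.sign x = Real.sign a := by
  rcases lt_trichotomy a 0 with h | h | h
  · rw [Real.sign_of_neg h, Real.sign_of_neg]; linarith [h2 h]
  · rw [h0 h, h]
  · rw [Real.sign_of_pos h, Real.sign_of_pos]; linarith [h1 h]

/-- If two sign conditions cannot hold over a common `y`, then by compactness their approximating cells
do not meet over a common `y` either, once `δ` is small compared with `ε`. -/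
lemma closedCell_disjoint (p : γ → MvPolynomial (α ⊕ β) ℝ) (a a' : γ → ℝ) (R ε : ℝ) (hε : 0 < ε)
    (hne : ∀ (y : α → ℝ) (w w' : β → ℝ),
      (∀ c, Real.sign (eval (Sum.elim y w) (p c)) = Real.sign (a c)) →
      (∀ c, Real.sign (eval (Sum.elim y w') (p c)) = Real.sign (a' c)) → False) :
    ∀ᶠ δ in nhdsWithin (0 : ℝ) (Set.Ioi 0), ∀ (y : α → ℝ) (w w' : β → ℝ),
      Sum.elim y w ∈ closedCell p a R δ ε → Sum.elim y w' ∈ closedCell p a' R δ ε → False := by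
  classical
  let K1 : (γ → ℝ) → Set (α ⊕ β → ℝ) := fun a => {v | ∑ x, v x ^ 2 ≤ R ∧
    ∀ c, (0 < a c → ε ≤ eval v (p c)) ∧ (a c < 0 → eval v (p c) ≤ -ε)}
  have hp : ∀ c, Continuous fun v => eval v (p c) := fun c => MvPolynomial.continuous_eval _
  have hK1 : ∀ a, IsClosed (K1 a) := by
    intro a
    refine IsClosed.and (isClosed_le (by fun_prop) continuous_const) ?_
    simp only [Set.ofPred_forall]
    refine isClosed_iInter fun c => IsClosed.and ?_ ?_
    · exact isClosed_imp_const fun _ => isClosed_le continuous_const (hp c)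
    · exact isClosed_imp_const fun _ => isClosed_le (hp c) continuous_const
  have hc1 : Continuous fun z : (α → ℝ) × (β → ℝ) × (β → ℝ) =>
      (Sum.elim z.1 z.2.1 : α ⊕ β → ℝ) := by
    refine continuous_pi fun x => ?_
    rcases x with x | x <;> simp only [Sum.elim_inl, Sum.elim_inr] <;> fun_prop
  have hc2 : Continuous fun z : (α → ℝ) × (β → ℝ) × (β → ℝ) =>
      (Sum.elim z.1 z.2.2 : α ⊕ β → ℝ) := by
    refine continuous_pi fun x => ?_
    rcases x with x | x <;> simp only [Sum.elim_inl, Sum.elim_inr] <;> fun_prop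
  let K : Set ((α → ℝ) × (β → ℝ) × (β → ℝ)) :=
    {z | Sum.elim z.1 z.2.1 ∈ K1 a ∧ Sum.elim z.1 z.2.2 ∈ K1 a'}
  have hKcl : IsClosed K := ((hK1 a).preimage hc1).inter ((hK1 a').preimage hc2)
  have hKcomp : IsCompact K := by
    refine (isCompact_closedBall (0 : (α → ℝ) × (β → ℝ) × (β → ℝ)) (√R)).of_isClosed_subset hKcl ?_
    rintro ⟨y, w, w'⟩ ⟨h1, h2⟩
    rw [mem_closedBall_zero_iff, Prod.norm_def, Prod.norm_def]
    refine max_le ?_ (max_le ?_ ?_)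
    · exact (pi_norm_le_iff_of_nonneg (Real.sqrt_nonneg _)).mpr fun x =>
        abs_le_sqrt_of_sum_sq_le h1.1 (.inl x)
    · exact (pi_norm_le_iff_of_nonneg (Real.sqrt_nonneg _)).mpr fun x =>
        abs_le_sqrt_of_sum_sq_le h1.1 (.inr x)
    · exact (pi_norm_le_iff_of_nonneg (Real.sqrt_nonneg _)).mpr fun x =>
        abs_le_sqrt_of_sum_sq_le h2.1 (.inr x)
  let h1 : (γ → ℝ) → (α ⊕ β → ℝ) → ℝ := fun a v => ∑ c, if a c = 0 then |eval v (p c)| else 0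
  have hh1 : ∀ a, Continuous (h1 a) := by
    intro a
    refine continuous_finsetSum _ fun c _ => ?_
    split_ifs
    · exact (hp c).abs
    · exact continuous_const
  have hh1nn : ∀ a v, 0 ≤ h1 a v := fun a v =>
    Finset.sum_nonneg fun c _ => by split_ifs <;> positivity
  have hzero : ∀ a v, v ∈ K1 a → h1 a v = 0 → ∀ c, Real.sign (eval v (p c)) = Real.sign (a c) := by
    intro a v hv h0 c
    have h3 := (Finset.sum_eq_zero_iff_of_nonneg (fun c _ => by split_ifs <;> positivity)).mp h0 c
      (Finset.mem_univ _)
    refine sign_eq_of_mem_cell hε (fun h => ?_) (hv.2 c).1 (hv.2 c).2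
    rw [if_pos h] at h3
    exact abs_eq_zero.mp h3
  have hle : ∀ a v δ, 0 < δ → v ∈ closedCell p a R δ ε → h1 a v ≤ Fintype.card γ * δ := by
    intro a v δ hδ hv
    have : h1 a v ≤ ∑ _c : γ, δ := Finset.sum_le_sum fun c _ => by
      split_ifs with h
      · exact (hv.2 c).1 h
      · exact hδ.le
    simpa using this
  have hmem : ∀ a v δ, v ∈ closedCell p a R δ ε → v ∈ K1 a := fun a v δ hv =>
    ⟨hv.1, fun c => (hv.2 c).2⟩
  rcases K.eq_empty_or_nonempty with hE | hE
  · refine Filter.Eventually.of_forall fun δ y w w' hw hw' => ?_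
    have : (y, w, w') ∈ K := ⟨hmem _ _ _ hw, hmem _ _ _ hw'⟩
    rw [hE] at this
    exact this
  · obtain ⟨z, hz, hmin⟩ := hKcomp.exists_isMinOn hE
      (f := fun z => h1 a (Sum.elim z.1 z.2.1) + h1 a' (Sum.elim z.1 z.2.2))
      (((hh1 a).comp hc1).add ((hh1 a').comp hc2)).continuousOn
    set m := h1 a (Sum.elim z.1 z.2.1) + h1 a' (Sum.elim z.1 z.2.2) with hm
    have hmpos : 0 < m := by
      refine lt_of_le_of_ne (add_nonneg (hh1nn _ _) (hh1nn _ _)) fun h => ?_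
      have e1 := hh1nn a (Sum.elim z.1 z.2.1)
      have e2 := hh1nn a' (Sum.elim z.1 z.2.2)
      exact hne z.1 z.2.1 z.2.2 (hzero _ _ hz.1 (by linarith)) (hzero _ _ hz.2 (by linarith))
    have hlim : ∀ᶠ δ in nhdsWithin (0 : ℝ) (Set.Ioi 0), 2 * (Fintype.card γ * δ) < m := by
      have hc : Continuous fun δ : ℝ => 2 * (Fintype.card γ * δ) := by fun_prop
      exact ((hc.tendsto 0).eventually_lt_const (by simpa using hmpos)).filter_mono
        nhdsWithin_le_nhds
    filter_upwards [hlim, self_mem_nhdsWithin] with δ hδ hδ0 y w w' hw hw'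
    have h3 := hmin (show (y, w, w') ∈ K from ⟨hmem _ _ _ hw, hmem _ _ _ hw'⟩)
    have h4 := hle _ _ _ hδ0 hw
    have h5 := hle _ _ _ hδ0 hw'
    simp only [Set.mem_ofPred_eq] at h3
    linarith

/-- Every nonempty family of closed cells over a common `y` contains a critical point: the tilted
barriers, being positive at `(y₀, W₀)` and small on the boundary, have a max-min inside. -/
lemma exists_critical_point [Nonempty I] (p : I → γ → MvPolynomial (α ⊕ β) ℝ) (a : I → γ → ℝ)
    (R δ ε κ : ℝ) (η : I → β → ℝ) (τ : I → ℝ) (ζ : α → ℝ) (y₀ : α → ℝ) (W₀ : I → β → ℝ)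
    (hmem : ∀ i, Sum.elim y₀ (W₀ i) ∈ closedCell (p i) (a i) R δ ε)
    (hκ : ∀ i, κ ≤ eval (Sum.elim y₀ (W₀ i)) (barrier (p i) R δ ε))
    (haff : ∀ i (v : α ⊕ β → ℝ), ∑ x, v x ^ 2 ≤ R →
      |∑ a, η i a * v (.inr a) + τ i + ∑ b, ζ b * v (.inl b)| < κ / 2) :
    ∃ (y : α → ℝ) (W : I → β → ℝ) (t : ℝ) (J : Finset I) (l : I → ℝ),
      (∀ i, Sum.elim y (W i) ∈ closedCell (p i) (a i) R δ ε) ∧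
      J.card ≤ Fintype.card α + 1 ∧ ∑ i ∈ J, l i = 1 ∧
      (∀ i ∈ J, tilted (barrier (p i) R δ ε) (η i) (τ i) ζ (Sum.elim y (W i)) = t) ∧
      (∀ i ∈ J, ∀ a, eval (Sum.elim y (W i)) (pderiv (.inr a) (barrier (p i) R δ ε)) = η i a) ∧
      ∀ b, ∑ i ∈ J, l i * eval (Sum.elim y (W i)) (pderiv (.inl b) (barrier (p i) R δ ε)) = ζ b := by
  classical
  let E : I → (α → ℝ) × (I → β → ℝ) → ℝ := fun i z =>
    tilted (barrier (p i) R δ ε) (η i) (τ i) ζ (Sum.elim z.1 (z.2 i))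
  have hc : ∀ i, Continuous fun z : (α → ℝ) × (I → β → ℝ) =>
      (Sum.elim z.1 (z.2 i) : α ⊕ β → ℝ) := by
    intro i
    refine continuous_pi fun x => ?_
    rcases x with x | x <;> simp only [Sum.elim_inl, Sum.elim_inr] <;> fun_prop
  let K : Set ((α → ℝ) × (I → β → ℝ)) :=
    {z | ∀ i, Sum.elim z.1 (z.2 i) ∈ closedCell (p i) (a i) R δ ε}
  have hKcl : IsClosed K := by
    simp only [K, Set.ofPred_forall]
    exact isClosed_iInter fun i => (isClosed_closedCell _ _ _ _ _).preimage (hc i)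
  have hKcomp : IsCompact K := by
    refine (isCompact_closedBall (0 : (α → ℝ) × (I → β → ℝ)) (√R)).of_isClosed_subset hKcl ?_
    rintro ⟨y, W⟩ h
    rw [mem_closedBall_zero_iff, Prod.norm_def]
    refine max_le ?_ ?_
    · exact (pi_norm_le_iff_of_nonneg (Real.sqrt_nonneg _)).mpr fun x =>
        abs_le_sqrt_of_sum_sq_le (h (Classical.arbitrary I)).1 (.inl x)
    · exact (pi_norm_le_iff_of_nonneg (Real.sqrt_nonneg _)).mpr fun i =>
        (pi_norm_le_iff_of_nonneg (Real.sqrt_nonneg _)).mpr fun x =>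
        abs_le_sqrt_of_sum_sq_le (h i).1 (.inr x)
  have hEc : ∀ i, Continuous (E i) := fun i => (continuous_tilted _ _ _ _).comp (hc i)
  have hinf : Continuous fun z => Finset.univ.inf' Finset.univ_nonempty fun i => E i z :=
    Continuous.finset_inf'_apply _ fun i _ => hEc i
  obtain ⟨⟨y, W⟩, hz, hmax⟩ := hKcomp.exists_isMaxOn ⟨(y₀, W₀), hmem⟩ hinf.continuousOn
  set t := Finset.univ.inf' Finset.univ_nonempty fun i => E i (y, W) with ht
  have hle : ∀ i, t ≤ E i (y, W) := fun i => Finset.inf'_le _ (Finset.mem_univ i)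
  have htκ : κ / 2 ≤ t := by
    refine le_trans ?_ (hmax (show (y₀, W₀) ∈ K from hmem))
    refine Finset.le_inf' _ _ fun i _ => ?_
    have h1 := haff i _ (hmem i).1
    have h2 := hκ i
    have h3 := (abs_lt.mp h1).2
    simp only [E, tilted]
    linarith
  have hloc : ∀ᶠ z in nhds (y, W), z ∈ K := by
    refine Filter.eventually_all.mpr fun i => ?_
    refine ((hc i).tendsto (y, W)).eventually ?_
    refine eventually_mem_closedCell _ _ _ _ _ _ (hz i) fun h0 => ?_
    have h1 := hle i
    have h2 := (abs_lt.mp (haff i _ (hz i).1)).1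
    simp only [E, tilted] at h1
    rw [h0] at h1
    linarith
  obtain ⟨J, l, h⟩ := exists_multipliers (fun i => barrier (p i) R δ ε) η τ ζ y W t hle (by
    filter_upwards [hloc] with z hzK
    have h1 := hmax hzK
    obtain ⟨i, _, hi⟩ := Finset.exists_mem_eq_inf' (s := Finset.univ) Finset.univ_nonempty
      fun i => E i z
    refine ⟨i, ?_⟩
    change E i z ≤ t
    rw [← hi]
    exact h1)
  exact ⟨y, W, t, J, l, hz, h⟩

/-- A critical point of the tilted max-min yields a solution of `critSystem` with the same `y`. -/
lemma critSystem_solution (Q : I → MvPolynomial (α ⊕ β) ℝ) (J : Finset I)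
    (θ : (I × β) ⊕ I ⊕ α ⊕ Unit → ℝ) (hρ : θ (.inr (.inr (.inr ()))) ≠ 0)
    (y : α → ℝ) (W : I → β → ℝ) (t : ℝ) (l : I → ℝ) (hl : ∑ i ∈ J, l i = 1)
    (h1 : ∀ i ∈ J, tilted (Q i) (fun a => θ (.inl (i, a))) (θ (.inr (.inl i)))
      (fun b => θ (.inr (.inr (.inl b))) / θ (.inr (.inr (.inr ())))) (Sum.elim y (W i)) = t)
    (h2 : ∀ i ∈ J, ∀ a, eval (Sum.elim y (W i)) (pderiv (.inr a) (Q i)) = θ (.inl (i, a)))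
    (h3 : ∀ b, ∑ i ∈ J, l i * eval (Sum.elim y (W i)) (pderiv (.inl b) (Q i)) =
      θ (.inr (.inr (.inl b))) / θ (.inr (.inr (.inr ())))) :
    ∃ u : α ⊕ (J × β) ⊕ J ⊕ Unit → ℝ, (∀ b, u (.inl b) = y b) ∧ ∀ k, eval u (critSystem Q J k) =
      θ (Sum.map (Prod.map (↑) id) (Sum.map (↑) (Sum.map id id)) k) := by
  classical
  set ρ := θ (.inr (.inr (.inr ()))) with hρd
  set ζ : α → ℝ := fun b => θ (.inr (.inr (.inl b))) / ρ with hζ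
  let u : α ⊕ (J × β) ⊕ J ⊕ Unit → ℝ := Sum.elim y (Sum.elim (fun ia => W ia.1 ia.2)
    (Sum.elim (fun i => ρ * l i) fun _ => t + ∑ b, ζ b * y b))
  have hcomp : ∀ i : J, (u ∘ (Sum.elim Sum.inl fun a => Sum.inr (Sum.inl (i, a)))) =
      Sum.elim y (W i) := by
    intro i; funext x; rcases x with x | x <;> simp [u]
  refine ⟨u, fun b => rfl, ?_⟩
  rintro (⟨i, a⟩ | i | b | _)
  · simp only [critSystem, Sum.elim_inl, eval_rename, hcomp, h2 i i.2 a]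
    rfl
  · simp only [critSystem, Sum.elim_inl, Sum.elim_inr, map_sub, eval_rename, hcomp, eval_X, map_sum,
      map_mul, h2 i i.2]
    have := h1 i i.2
    simp only [tilted, Sum.elim_inl, Sum.elim_inr] at this
    have e1 : ∑ a, W i a * θ (.inl (↑i, a)) = ∑ a, θ (.inl (↑i, a)) * W i a :=
      Finset.sum_congr rfl fun _ _ => mul_comm _ _
    simp only [Sum.map_inl, Sum.map_inr, u, Sum.elim_inr]
    linarith
  · simp only [critSystem, Sum.elim_inl, Sum.elim_inr, eval_rename, hcomp, eval_X, map_sum,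
      map_mul, u]
    have := h3 b
    rw [← Finset.sum_coe_sort, eq_div_iff hρ] at this
    simp only [Sum.map_inl, Sum.map_inr, id]
    rw [← this, Finset.sum_mul]
    exact Finset.sum_congr rfl fun _ _ => by ring
  · simp only [critSystem, Sum.elim_inl, Sum.elim_inr, eval_X, map_sum, u]
    rw [← Finset.mul_sum, Finset.sum_coe_sort J l, hl, mul_one]
    rfl
end

/-! ### Counting joint sign types -/

lemma card_small_subsets_le {I : Type*} [Fintype I] (k : ℕ) :
    (Finset.univ.filter fun J : Finset I => J.card ≤ k).card ≤ (Fintype.card I + 1) ^ k := by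
  classical
  have h : (Finset.univ : Finset (Fin k → Option I)).card = (Fintype.card I + 1) ^ k := by
    simp
  rw [← h]
  refine Finset.card_le_card_of_surjOn
    (fun f => Finset.univ.filter fun i => ∃ j, f j = some i) ?_
  intro J hJ
  have hJ' : J.card ≤ k := by simpa using hJ
  refine ⟨fun j => J.toList[(j : ℕ)]?, by simp, ?_⟩
  ext i
  simp only [Finset.mem_filter, Finset.mem_univ, true_and]
  rw [← Finset.mem_toList, List.mem_iff_getElem?]
  constructor
  · rintro ⟨j, hj⟩; exact ⟨j, hj⟩
  · rintro ⟨j, hj⟩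
    have : j < J.toList.length := (List.getElem?_eq_some_iff.mp hj).1
    exact ⟨⟨j, by rw [Finset.length_toList] at this; omega⟩, hj⟩

lemma exists_pos_forall_lt {T : Type*} [Finite T] (f : T → ℝ) (hf : ∀ t, 0 < f t) :
    ∃ ε : ℝ, 0 < ε ∧ ∀ t, ε < f t := by
  have h : ∀ᶠ ε in nhdsWithin (0 : ℝ) (Set.Ioi 0), ∀ t, ε < f t :=
    Filter.eventually_all.mpr fun t => (eventually_lt_nhds (hf t)).filter_mono nhdsWithin_le_nhds
  obtain ⟨ε, h1, h2⟩ := (h.and self_mem_nhdsWithin).exists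
  exact ⟨ε, h2, h1⟩

section
variable {α β γ I : Type*} [Fintype α] [Fintype β] [Fintype γ] [Fintype I]

lemma eval_barrier_pos (p : γ → MvPolynomial (α ⊕ β) ℝ) (R δ ε : ℝ) (v : α ⊕ β → ℝ)
    (hR : ∑ x, v x ^ 2 < R) (hδ : 0 < δ) (hδε : δ < ε)
    (hε : ∀ c, eval v (p c) ≠ 0 → ε < |eval v (p c)|) : 0 < eval v (barrier p R δ ε) := by
  rw [eval_barrier]
  refine mul_pos (by have : 0 < R - ∑ x, v x ^ 2 := by linarith
                     positivity) (Finset.prod_pos fun c _ => ?_)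
  by_cases h : eval v (p c) = 0
  · rw [h]
    refine sq_pos_of_ne_zero (mul_ne_zero ?_ ?_)
    · simpa using hδ.ne'
    · simpa using (hδ.trans hδε).ne'
  · have h1 := hε c h
    have h2 : ε ^ 2 < eval v (p c) ^ 2 := by
      rw [← sq_abs (eval v (p c))]; exact pow_lt_pow_left₀ h1 (by linarith) two_ne_zero
    have h3 : δ ^ 2 < ε ^ 2 := pow_lt_pow_left₀ hδε hδ.le two_ne_zero
    exact sq_pos_of_pos (mul_pos (by linarith) (by linarith))

/-- Perturbation parameters `θ` that are small on the ball of squared radius `R`, and generic for all the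
systems `critSystem Q J` at once. The parameters are taken close to the vector that is `1` at `ρ`
and `0` elsewhere. -/
lemma exists_generic [Nonempty I] (Q : I → MvPolynomial (α ⊕ β) ℝ) (D : ℕ)
    (hD : ∀ i, (Q i).totalDegree ≤ D) (R κ : ℝ) (hκ : 0 < κ) :
    ∃ θ : (I × β) ⊕ I ⊕ α ⊕ Unit → ℝ, θ (.inr (.inr (.inr ()))) ≠ 0 ∧
      (∀ i (v : α ⊕ β → ℝ), ∑ x, v x ^ 2 ≤ R →
        |∑ a, θ (.inl (i, a)) * v (.inr a) + θ (.inr (.inl i)) +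
          ∑ b, θ (.inr (.inr (.inl b))) / θ (.inr (.inr (.inr ()))) * v (.inl b)| < κ) ∧
      ∀ (J : Finset I) (A : Finset (α ⊕ (J × β) ⊕ J ⊕ Unit → ℝ)),
        (∀ u ∈ A, ∀ k, eval u (critSystem Q J k) =
          θ (Sum.map (Prod.map (↑) id) (Sum.map (↑) (Sum.map id id)) k)) →
        A.card ≤ (Fintype.card (α ⊕ (J × β) ⊕ J ⊕ Unit) * (D + 1) + 1) ^
          Fintype.card (α ⊕ (J × β) ⊕ J ⊕ Unit) := by
  classical
  have hae : ∀ᵐ θ : (I × β) ⊕ I ⊕ α ⊕ Unit → ℝ, ∀ (J : Finset I)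
      (A : Finset (α ⊕ (J × β) ⊕ J ⊕ Unit → ℝ)),
        (∀ u ∈ A, ∀ k, eval u (critSystem Q J k) =
          θ (Sum.map (Prod.map (↑) id) (Sum.map (↑) (Sum.map id id)) k)) →
        A.card ≤ (Fintype.card (α ⊕ (J × β) ⊕ J ⊕ Unit) * (D + 1) + 1) ^
          Fintype.card (α ⊕ (J × β) ⊕ J ⊕ Unit) := by
    refine ae_all_iff.mpr fun J => ?_
    refine ae_card_system_le (κ := (I × β) ⊕ I ⊕ α ⊕ Unit) (κ' := (J × β) ⊕ J ⊕ α ⊕ Unit)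
      (by simp only [Fintype.card_sum]; omega) _ ?_ (critSystem Q J) (D + 1)
      (totalDegree_critSystem_le Q J D hD)
    exact (Subtype.val_injective.prodMap Function.injective_id).sumMap
      (Subtype.val_injective.sumMap (Function.injective_id.sumMap Function.injective_id))
  let θ₀ : (I × β) ⊕ I ⊕ α ⊕ Unit → ℝ :=
    Sum.elim 0 (Sum.elim 0 (Sum.elim 0 1))
  let Φ : ((I × β) ⊕ I ⊕ α ⊕ Unit → ℝ) → ℝ := fun θ =>
    (∑ i, ∑ a, |θ (.inl (i, a))| * √R) + (∑ i, |θ (.inr (.inl i))|) +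
      ∑ b, |θ (.inr (.inr (.inl b))) / θ (.inr (.inr (.inr ())))| * √R
  have hρ0 : θ₀ (.inr (.inr (.inr ()))) ≠ 0 := by simp [θ₀]
  have hρ : ∀ᶠ θ in nhds θ₀, θ (.inr (.inr (.inr ()))) ≠ 0 :=
    (continuous_apply (Sum.inr (Sum.inr (Sum.inr ())) : (I × β) ⊕ I ⊕ α ⊕ Unit)).continuousAt.eventually_ne hρ0
  have hΦc : ContinuousAt Φ θ₀ := by
    have hap : ∀ x, ContinuousAt (fun θ : (I × β) ⊕ I ⊕ α ⊕ Unit → ℝ => θ x) θ₀ :=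
      fun x => (continuous_apply x).continuousAt
    refine ((tendsto_finsetSum _ fun i _ => tendsto_finsetSum _ fun a _ =>
      ((hap _).abs.mul continuousAt_const)).add (tendsto_finsetSum _ fun i _ => (hap _).abs)).add
      (tendsto_finsetSum _ fun b _ => (((hap _).div (hap _) hρ0).abs.mul continuousAt_const))
  have hΦ0 : Φ θ₀ = 0 := by simp [Φ, θ₀]
  have hΦ : ∀ᶠ θ in nhds θ₀, Φ θ < κ := hΦc.eventually_lt_const (by rw [hΦ0]; exact hκ)
  have hfreq := mem_closure_iff_frequently.mp ((Measure.dense_of_ae hae) θ₀)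
  obtain ⟨θ, h1, h2, h3⟩ := (hfreq.and_eventually (hρ.and hΦ)).exists
  refine ⟨θ, h2, fun i v hv => lt_of_le_of_lt ?_ h3, h1⟩
  have hb := abs_le_sqrt_of_sum_sq_le hv
  have e1 : |∑ a, θ (.inl (i, a)) * v (.inr a)| ≤ ∑ i, ∑ a, |θ (.inl (i, a))| * √R := by
    refine le_trans ?_ (Finset.single_le_sum
      (f := fun i => ∑ a, |θ (.inl (i, a))| * √R) (fun _ _ => by positivity) (Finset.mem_univ i))
    refine (Finset.abs_sum_le_sum_abs _ _).trans (Finset.sum_le_sum fun a _ => ?_)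
    rw [abs_mul]
    exact mul_le_mul_of_nonneg_left (hb _) (abs_nonneg _)
  have e2 : |θ (.inr (.inl i))| ≤ ∑ i, |θ (.inr (.inl i))| :=
    Finset.single_le_sum (f := fun i => |θ (.inr (.inl i))|) (fun _ _ => by positivity)
      (Finset.mem_univ i)
  have e3 : |∑ b, θ (.inr (.inr (.inl b))) / θ (.inr (.inr (.inr ()))) * v (.inl b)| ≤
      ∑ b, |θ (.inr (.inr (.inl b))) / θ (.inr (.inr (.inr ())))| * √R := by
    refine (Finset.abs_sum_le_sum_abs _ _).trans (Finset.sum_le_sum fun a _ => ?_)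
    rw [abs_mul]
    exact mul_le_mul_of_nonneg_left (hb _) (abs_nonneg _)
  exact (abs_add_three _ _ _).trans (add_le_add (add_le_add e1 e2) e3)

/-- A Warren-type bound. For each `i : I` the signs of the polynomials `p i c` at `(y, w i y)` determine
`w i y` from `y`. Then the number of joint sign types, as `y` varies, is polynomial of exponent only
`|α| + 1` in `|I|`. Each type gives a compact cell and thus a solution of `critSystem` for some
`J` with at most `|α| + 1` elements; different types give different solutions, as their cells have
disjoint projections to `y`. The auxiliary blocks belong to separate copies of `β`, so only the
blocks in `J` enter the system, which has at most `d` unknowns. -/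
theorem card_types_le [Nonempty I] (p : I → γ → MvPolynomial (α ⊕ β) ℝ) (D : ℕ)
    (hD : ∀ i c, (p i c).totalDegree ≤ D) (w : I → (α → ℝ) → β → ℝ)
    (huniq : ∀ i (y y' : α → ℝ) (w' : β → ℝ),
      (∀ c, Real.sign (eval (Sum.elim y' w') (p i c)) =
        Real.sign (eval (Sum.elim y (w i y)) (p i c))) → w' = w i y')
    (X : Finset (α → ℝ))
    (hX : ∀ y ∈ X, ∀ y' ∈ X, (∀ i c, Real.sign (eval (Sum.elim y (w i y)) (p i c)) =
      Real.sign (eval (Sum.elim y' (w i y')) (p i c))) → y = y') (d : ℕ)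
    (hd : d = (Fintype.card α + 1) * (Fintype.card β + 2)) :
    X.card ≤ (Fintype.card I + 1) ^ (Fintype.card α + 1) *
      (d * (5 + 8 * D * Fintype.card γ) + 1) ^ d := by
  classical
  let V : X → I → α ⊕ β → ℝ := fun y i => Sum.elim y.1 (w i y.1)
  obtain ⟨R, hR⟩ : ∃ R, ∀ t : X × I, ∑ x, V t.1 t.2 x ^ 2 < R := by
    obtain ⟨R, hR⟩ := (Set.finite_range fun t : X × I => ∑ x, V t.1 t.2 x ^ 2).bddAbove
    exact ⟨R + 1, fun t => lt_of_le_of_lt (hR ⟨t, rfl⟩) (lt_add_one R)⟩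
  obtain ⟨ε, hε0, hε⟩ := exists_pos_forall_lt
    (fun t : X × I × γ => if eval (V t.1 t.2.1) (p t.2.1 t.2.2) = 0 then 1 else
      |eval (V t.1 t.2.1) (p t.2.1 t.2.2)|) (fun t => by
        split_ifs with h
        · exact one_pos
        · exact abs_pos.mpr h)
  have hε' : ∀ (y : X) i c, eval (V y i) (p i c) ≠ 0 → ε < |eval (V y i) (p i c)| := by
    intro y i c h
    have := hε (y, i, c)
    rwa [if_neg h] at this
  have hdisj : ∀ᶠ δ in nhdsWithin (0 : ℝ) (Set.Ioi 0), ∀ (y₁ y₂ : X) (i : I),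
      (∃ c, Real.sign (eval (V y₁ i) (p i c)) ≠ Real.sign (eval (V y₂ i) (p i c))) →
      ∀ (y : α → ℝ) (v v' : β → ℝ),
      Sum.elim y v ∈ closedCell (p i) (fun c => eval (V y₁ i) (p i c)) R δ ε →
      Sum.elim y v' ∈ closedCell (p i) (fun c => eval (V y₂ i) (p i c)) R δ ε → False := by
    refine Filter.eventually_all.mpr fun y₁ => Filter.eventually_all.mpr fun y₂ =>
      Filter.eventually_all.mpr fun i => ?_
    by_cases h : ∃ c, Real.sign (eval (V y₁ i) (p i c)) ≠ Real.sign (eval (V y₂ i) (p i c))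
    · refine (closedCell_disjoint (p i) _ _ R ε hε0 ?_).mono fun δ hδ _ => hδ
      intro y v v' h1 h2
      have e1 : v = w i y := huniq i y₁ y v h1
      have e2 : v' = w i y := huniq i y₂ y v' h2
      obtain ⟨c, hc⟩ := h
      apply hc
      rw [← h1 c, ← h2 c, e1, e2]
    · exact Filter.Eventually.of_forall fun _ h' => absurd h' h
  obtain ⟨δ, ⟨hδd, hδε⟩, hδ0⟩ := ((hdisj.and
    ((eventually_lt_nhds hε0).filter_mono nhdsWithin_le_nhds)).and self_mem_nhdsWithin).exists
  have hδ0 : 0 < δ := hδ0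
  obtain ⟨κ, hκ0, hκ⟩ := exists_pos_forall_lt
    (fun t : X × I => eval (V t.1 t.2) (barrier (p t.2) R δ ε)) (fun t =>
      eval_barrier_pos _ _ _ _ _ (hR t) hδ0 hδε (hε' t.1 t.2))
  set D' := 4 + 8 * D * Fintype.card γ with hD'
  have hQ : ∀ i, (barrier (p i) R δ ε).totalDegree ≤ D' := fun i =>
    totalDegree_barrier_le _ _ _ _ _ (hD i)
  obtain ⟨θ, hρ, haff, hcard⟩ := exists_generic (fun i => barrier (p i) R δ ε) D' hQ R (κ / 2)
    (half_pos hκ0)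
  -- The solution `u` of the critical system attached to a type, and the cells it lies in.
  let P : X → (J : Finset I) → (α ⊕ (J × β) ⊕ J ⊕ Unit → ℝ) → Prop := fun y J u =>
    (∀ k, eval u (critSystem (fun i => barrier (p i) R δ ε) J k) =
      θ (Sum.map (Prod.map (↑) id) (Sum.map (↑) (Sum.map id id)) k)) ∧
    ∃ W : I → β → ℝ, ∀ i, Sum.elim (fun b => u (.inl b)) (W i) ∈
      closedCell (p i) (fun c => eval (V y i) (p i c)) R δ ε
  have hP : ∀ y : X, ∃ J : Finset I, J.card ≤ Fintype.card α + 1 ∧ ∃ u, P y J u := by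
    intro y
    have hmem : ∀ i, Sum.elim y.1 (w i y.1) ∈
        closedCell (p i) (fun c => eval (V y i) (p i c)) R δ ε := by
      refine fun i => ⟨(hR (y, i)).le, fun c => ⟨fun h => ?_, fun h => ?_, fun h => ?_⟩⟩
      · change |eval (V y i) (p i c)| ≤ δ
        rw [show eval (V y i) (p i c) = 0 from h, abs_zero]; exact hδ0.le
      · have := hε' y i c h.ne'
        rw [abs_of_pos h] at this
        exact this.le
      · have := hε' y i c h.ne
        rw [abs_of_neg h] at this
        exact le_neg.mp this.le
    obtain ⟨y', W, t, J, l, hc, hJ, hl, h1, h2, h3⟩ := exists_critical_point p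
      (fun i c => eval (V y i) (p i c)) R δ ε κ (fun i a => θ (.inl (i, a)))
      (fun i => θ (.inr (.inl i))) (fun b => θ (.inr (.inr (.inl b))) / θ (.inr (.inr (.inr ()))))
      y.1 (fun i => w i y.1) hmem (fun i => (hκ (y, i)).le) haff
    obtain ⟨u, hu, hs⟩ := critSystem_solution (fun i => barrier (p i) R δ ε) J θ hρ y' W t l hl
      h1 h2 h3
    refine ⟨J, hJ, u, hs, W, fun i => ?_⟩
    rw [show (fun b => u (.inl b)) = y' from funext hu]
    exact hc i
  have hinj : ∀ y₁ y₂ J u, P y₁ J u → P y₂ J u → y₁ = y₂ := by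
    rintro y₁ y₂ J u ⟨_, W₁, h1⟩ ⟨_, W₂, h2⟩
    by_contra hne
    have : ¬ ∀ i c, Real.sign (eval (V y₁ i) (p i c)) = Real.sign (eval (V y₂ i) (p i c)) :=
      fun h => hne (Subtype.ext (hX y₁ y₁.2 y₂ y₂.2 h))
    push Not at this
    obtain ⟨i, c, hic⟩ := this
    exact hδd y₁ y₂ i ⟨c, hic⟩ _ _ _ (h1 i) (h2 i)
  have hfib : ∀ J : Finset I, J.card ≤ Fintype.card α + 1 →
      (Finset.univ.filter fun y : X => ∃ u, P y J u).card ≤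
        (d * (5 + 8 * D * Fintype.card γ) + 1) ^ d := by
    intro J hJ
    have hch : ∀ y : X, ∃ u, (∃ u, P y J u) → P y J u := fun y => by
      by_cases h : ∃ u, P y J u
      · exact ⟨h.choose, fun _ => h.choose_spec⟩
      · exact ⟨0, fun h' => absurd h' h⟩
    choose U hU using hch
    have hA := hcard J ((Finset.univ.filter fun y : X => ∃ u, P y J u).image U) (by
      intro u hu
      obtain ⟨y, hy, rfl⟩ := Finset.mem_image.mp hu
      exact (hU y (Finset.mem_filter.mp hy).2).1)
    rw [Finset.card_image_of_injOn (by
      intro y₁ h1 y₂ h2 h12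
      have e1 := hU y₁ (Finset.mem_filter.mp h1).2
      have e2 := hU y₂ (Finset.mem_filter.mp h2).2
      rw [← h12] at e2
      exact hinj _ _ _ _ e1 e2)] at hA
    refine hA.trans ?_
    have hcd : Fintype.card (α ⊕ (J × β) ⊕ J ⊕ Unit) ≤ d := by
      simp only [Fintype.card_sum, Fintype.card_prod, Fintype.card_coe, Fintype.card_unit, hd]
      nlinarith [Nat.mul_le_mul_right (Fintype.card β) hJ]
    have e5 : D' + 1 = 5 + 8 * D * Fintype.card γ := by omega
    rw [e5]
    exact (Nat.pow_le_pow_left (by gcongr) _).trans (Nat.pow_le_pow_right (by omega) hcd)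
  have hcov : (Finset.univ : Finset X) ⊆
      (Finset.univ.filter fun J : Finset I => J.card ≤ Fintype.card α + 1).biUnion
        fun J => Finset.univ.filter fun y : X => ∃ u, P y J u := by
    intro y _
    obtain ⟨J, hJ, hu⟩ := hP y
    exact Finset.mem_biUnion.mpr ⟨J, by simpa using hJ, by simpa using hu⟩
  have hX' : X.card = (Finset.univ : Finset X).card := by simp
  rw [hX']
  refine (Finset.card_le_card hcov).trans ((Finset.card_biUnion_le_card_mul _ _ _
    fun J hJ => hfib J (Finset.mem_filter.mp hJ).2).trans ?_)
  exact Nat.mul_le_mul_right _ (card_small_subsets_le _)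
end

/-! ### Counting output patterns of a circuit -/

lemma totalDegree_bind₁_le {σ τ : Type*} (S : σ → MvPolynomial τ ℝ)
    (hS : ∀ t, (S t).totalDegree ≤ 1) (q : MvPolynomial σ ℝ) :
    (bind₁ S q).totalDegree ≤ q.totalDegree := by
  conv_lhs => rw [q.as_sum, map_sum]
  refine totalDegree_finsetSum_le fun e he => ?_
  rw [bind₁_monomial]
  refine (totalDegree_mul _ _).trans ?_
  rw [totalDegree_C, zero_add]
  refine (totalDegree_finsetProd _ _).trans ((Finset.sum_le_sum fun t _ =>
    (totalDegree_pow _ _).trans (Nat.mul_le_mul_left _ (hS t))).trans ?_)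
  simpa [Finsupp.sum] using le_totalDegree he

lemma eval_bind₁ {σ τ : Type*} (S : σ → MvPolynomial τ ℝ) (q : MvPolynomial σ ℝ) (v : τ → ℝ) :
    eval v (bind₁ S q) = eval (fun t => eval v (S t)) q := by
  simp only [eval, eval₂Hom_bind₁]

section
variable {n k s b : ℕ} {circ : Fin s → (Fin (n + k) → ℝ) → ℝ}

/-- The values of all gates on the deterministic input `y 0, …, y (n - 1)` and the random
input `r`; the last coordinate of `y` (a candidate output) is ignored. -/
def gateValues (circ : Fin s → (Fin (n + k) → ℝ) → ℝ) (r : Fin k → ℝ) (y : Fin (n + 1) → ℝ) :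
    Fin s → ℝ :=
  fun g => circ g (Fin.append (Fin.init y) r)

/-- The polynomials defining the graph of the gate `i`, with the inputs of the gate substituted. If the
earlier entries of `w'` are the correct gate values, sign agreement with a true computation forces
the entry `i` to be correct as well. -/
lemma exists_gate_polynomials (hcirc : IsSACircuit (n + k) s b circ) (r : Fin k → ℝ) (i : Fin s) :
    ∃ P : Fin b → MvPolynomial (Fin (n + 1) ⊕ Fin s) ℝ, (∀ c, (P c).totalDegree ≤ b) ∧
      ∀ (y y' : Fin (n + 1) → ℝ) (w' : Fin s → ℝ),
        (∀ i' < i, w' i' = gateValues circ r y' i') →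
        (∀ c, Real.sign (eval (Sum.elim y' w') (P c)) =
          Real.sign (eval (Sum.elim y (gateValues circ r y)) (P c))) →
        w' i = gateValues circ r y' i := by
  obtain ⟨l, g, h, ⟨m, q, hm, hq, hsep⟩, hin, hf⟩ := hcirc i
  have hS : ∀ j : Fin l, ∃ S : MvPolynomial (Fin (n + 1) ⊕ Fin s) ℝ, S.totalDegree ≤ 1 ∧
      ∀ (y : Fin (n + 1) → ℝ) (w' : Fin s → ℝ), (∀ i' < i, w' i' = gateValues circ r y i') →
        eval (Sum.elim y w') S = h j (Fin.append (Fin.init y) r) := by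
    intro j
    rcases hin j with ⟨u, hu⟩ | ⟨cst, hc⟩ | ⟨i', hi', hi⟩
    · induction u using Fin.addCases with
      | left u => exact ⟨X (.inl u.castSucc), by simp, fun y w' _ => by simp [hu, Fin.init]⟩
      | right v => exact ⟨C (r v), by simp, fun y w' _ => by simp [hu]⟩
    · exact ⟨C cst, by simp, fun y w' _ => by simp [hc]⟩
    · exact ⟨X (.inr i'), by simp, fun y w' hw => by simp [hi, hw i' hi', gateValues]⟩
  choose S hS1 hS2 using hS
  let T : Fin (l + 1) → MvPolynomial (Fin (n + 1) ⊕ Fin s) ℝ :=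
    Fin.snoc (α := fun _ => MvPolynomial (Fin (n + 1) ⊕ Fin s) ℝ) S (X (.inr i))
  have hT1 : ∀ t, (T t).totalDegree ≤ 1 := by
    intro t
    induction t using Fin.lastCases with
    | last => simp [T]
    | cast j => simpa [T] using hS1 j
  refine ⟨fun c => if hc : (c : ℕ) < m then bind₁ T (q ⟨c, hc⟩) else 0, fun c => ?_, ?_⟩
  · dsimp only
    split_ifs
    · exact (totalDegree_bind₁_le T hT1 _).trans (hq _)
    · simp
  · intro y y' w' hw hsign
    let z : Fin (l + 1) → ℝ := fun t => eval (Sum.elim y' w') (T t)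
    let z₀ : Fin (l + 1) → ℝ := fun t => eval (Sum.elim y (gateValues circ r y)) (T t)
    have hz0 : z₀ (Fin.last l) = g fun j => z₀ j.castSucc := by
      have : ∀ j : Fin l, z₀ j.castSucc = h j (Fin.append (Fin.init y) r) := fun j => by
        simp only [z₀, T, Fin.snoc_castSucc]
        exact hS2 j y _ fun _ _ => rfl
      simp only [this]
      simp [z₀, T, gateValues, hf]
    by_contra hne
    have hz : ¬ z (Fin.last l) = g fun j => z j.castSucc := by
      have : ∀ j : Fin l, z j.castSucc = h j (Fin.append (Fin.init y') r) := fun j => by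
        simp only [z, T, Fin.snoc_castSucc]
        exact hS2 j y' _ hw
      simp only [this]
      simpa [z, T, gateValues, hf] using hne
    refine hsep z₀ hz0 z hz (funext fun c => ?_)
    have := hsign ⟨c, c.2.trans_le hm⟩
    simp only [c.2, dif_pos, eval_bind₁] at this
    exact this.symm

/-- Polynomials whose sign pattern certifies that `w'` lists the gate values, together with one (index
`none`) whose vanishing says that the last coordinate of `y` is the output. -/
lemma exists_circuit_polynomials (hb : 1 ≤ b) (hcirc : IsSACircuit (n + k) s b circ)
    (r : Fin k → ℝ) (o : Fin s) :
    ∃ P : Option (Fin s × Fin b) → MvPolynomial (Fin (n + 1) ⊕ Fin s) ℝ,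
      (∀ c, (P c).totalDegree ≤ b) ∧
      (∀ (y y' : Fin (n + 1) → ℝ) (w' : Fin s → ℝ),
        (∀ c, Real.sign (eval (Sum.elim y' w') (P c)) =
          Real.sign (eval (Sum.elim y (gateValues circ r y)) (P c))) →
        w' = gateValues circ r y') ∧
      ∀ y w, eval (Sum.elim y w) (P none) = y (Fin.last n) - w o := by
  choose P hP1 hP2 using exists_gate_polynomials hcirc r
  refine ⟨fun c => c.elim (X (.inl (Fin.last n)) - X (.inr o)) fun gj => P gj.1 gj.2, ?_, ?_, ?_⟩
  · rintro (_ | ⟨g, j⟩)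
    · exact (totalDegree_sub _ _).trans (by simpa using hb)
    · exact hP1 g j
  · intro y y' w' h
    funext i
    induction i using WellFoundedLT.induction with
    | ind i ih => exact hP2 i y y' w' ih fun c => h (some (i, c))
  · intro y w; simp

/-- The bound on the number of output patterns of a circuit over `M` random inputs. -/
def patternBound (n s b M : ℕ) : ℕ :=
  (M + 1) ^ (n + 2) *
    ((n + 2) * (s + 2) * (5 + 8 * b * (s * b + 1)) + 1) ^ ((n + 2) * (s + 2))

/-- For `M` fixed random inputs, the sets of indices `i` with `F (x, r i) = z` number at most
`patternBound n s b M` as `(x, z)` varies. -/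
theorem card_patterns_le (hb : 1 ≤ b) (hcirc : IsSACircuit (n + k) s b circ) (o : Fin s)
    {I : Type*} [Fintype I] [Nonempty I] (r : I → Fin k → ℝ) (B : Finset (Finset I))
    (hB : ∀ T ∈ B, ∃ (x : Fin n → ℝ) (z : ℝ), ∀ i, i ∈ T ↔ circ o (Fin.append x (r i)) = z) :
    B.card ≤ patternBound n s b (Fintype.card I) := by
  classical
  choose P hP1 hP2 hP3 using fun i => exists_circuit_polynomials hb hcirc (r i) o
  have hex : ∀ T : B, ∃ y : Fin (n + 1) → ℝ, ∀ i, i ∈ T.1 ↔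
      circ o (Fin.append (Fin.init y) (r i)) = y (Fin.last n) := by
    intro T
    obtain ⟨x, z, h⟩ := hB T.1 T.2
    exact ⟨Fin.snoc (α := fun _ => ℝ) x z, fun i => by simpa using h i⟩
  choose Y hY using hex
  have hkey : ∀ T T' : B, (∀ i c,
      Real.sign (eval (Sum.elim (Y T) (gateValues circ (r i) (Y T))) (P i c)) =
      Real.sign (eval (Sum.elim (Y T') (gateValues circ (r i) (Y T'))) (P i c))) → T = T' := by
    intro T T' h
    refine Subtype.ext (Finset.ext fun i => ?_)
    have h1 := h i none
    rw [hP3, hP3] at h1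
    have e : ∀ T : B, i ∈ T.1 ↔ Real.sign (Y T (Fin.last n) - gateValues circ (r i) (Y T) o) = 0 := by
      intro T
      rw [hY, Real.sign_eq_zero_iff, sub_eq_zero, eq_comm]
      rfl
    rw [e T, e T', h1]
  have hinj : Function.Injective Y := fun T T' h => hkey T T' fun i c => by rw [h]
  have := card_types_le P b hP1 (fun i => gateValues circ (r i)) hP2
    (Finset.univ.image Y) (by
      intro y hy y' hy' h
      obtain ⟨T, _, rfl⟩ := Finset.mem_image.mp hy
      obtain ⟨T', _, rfl⟩ := Finset.mem_image.mp hy'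
      rw [hkey T T' h]) _ rfl
  rw [Finset.card_image_of_injective _ hinj] at this
  simpa [patternBound] using this
end

/-! ### Measurability of circuits -/

lemma measurable_real_sign : Measurable Real.sign := by
  unfold Real.sign
  exact Measurable.ite measurableSet_Iio measurable_const
    (Measurable.ite measurableSet_Ioi measurable_const measurable_const)

lemma IsTSemialgebraic.measurableSet {N t : ℕ} {S : Set (Fin N → ℝ)}
    (h : IsTSemialgebraic N t S) : MeasurableSet S := by
  obtain ⟨m, p, -, -, hsep⟩ := h
  let Φ : (Fin N → ℝ) → Fin m → ℝ := fun y i => Real.sign (eval y (p i))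
  have hΦ : Measurable Φ := measurable_pi_lambda _ fun i =>
    measurable_real_sign.comp (MvPolynomial.continuous_eval _).measurable
  have hfin : (Φ '' S).Finite := by
    refine (Set.Finite.pi' (ι := Fin m) (t := fun _ => ({-1, 0, 1} : Set ℝ))
      fun _ => by simp).subset ?_
    rintro _ ⟨y, -, rfl⟩ i
    rcases Real.sign_apply_eq (eval y (p i)) with h | h | h <;> simp [Φ, h]
  have : S = Φ ⁻¹' (Φ '' S) := by
    refine (Set.subset_preimage_image _ _).antisymm ?_
    rintro y ⟨y', hy', h⟩
    by_contra hy
    exact hsep y' hy' y hy h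
  rw [this]
  exact hΦ hfin.measurableSet

/-- A function with Borel graph is Borel: by Lusin–Souslin, the injective projection of the part of the
graph above `A` is Borel. -/
lemma IsTSemialgebraicFun.measurable {l t : ℕ} {g : (Fin l → ℝ) → ℝ}
    (h : IsTSemialgebraicFun l t g) : Measurable g := by
  have hG := IsTSemialgebraic.measurableSet h
  intro A hA
  have hi : Measurable fun w : Fin (l + 1) → ℝ => fun j : Fin l => w j.castSucc := by fun_prop
  have := (hG.inter ((measurable_pi_apply (Fin.last l)) hA)).image_of_measurable_injOn hi (by
    rintro w ⟨hw, -⟩ w' ⟨hw', -⟩ hww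
    have e : (fun j : Fin l => w j.castSucc) = fun j : Fin l => w' j.castSucc := hww
    funext t
    induction t using Fin.lastCases with
    | last =>
      have h1 : w (Fin.last l) = _ := hw
      have h2 : w' (Fin.last l) = _ := hw'
      rw [h1, h2, e]
    | cast j => exact congrFun e j)
  convert this using 1
  ext x
  constructor
  · intro hx
    refine ⟨Fin.snoc (α := fun _ => ℝ) x (g x), ⟨?_, ?_⟩, ?_⟩
    · simp
    · simpa using hx
    · simp
  · rintro ⟨w, ⟨hw, hwA⟩, rfl⟩
    have h1 : w (Fin.last l) = _ := hw
    have h2 : w (Fin.last l) ∈ A := hwA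
    rw [h1] at h2
    exact h2

lemma IsSACircuit.measurable {N s b : ℕ} {f : Fin s → (Fin N → ℝ) → ℝ}
    (h : IsSACircuit N s b f) (i : Fin s) : Measurable (f i) := by
  induction i using WellFoundedLT.induction with
  | ind i ih =>
    obtain ⟨l, g, hh, hg, hin, hf⟩ := h i
    rw [hf]
    refine hg.measurable.comp (measurable_pi_lambda _ fun j => ?_)
    rcases hin j with ⟨u, hu⟩ | ⟨c, hc⟩ | ⟨i', hi', hi⟩
    · rw [hu]; exact measurable_pi_apply u
    · rw [hc]; exact measurable_const
    · rw [hi]; exact ih i' hi'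

lemma measurable_fin_append {n k : ℕ} :
    Measurable fun z : (Fin n → ℝ) × (Fin k → ℝ) => Fin.append z.1 z.2 := by
  refine measurable_pi_lambda _ fun u => ?_
  induction u using Fin.addCases with
  | left u => simp only [Fin.append_left]; fun_prop
  | right v => simp only [Fin.append_right]; fun_prop

/-! ### Compact subsets of analytic sets -/

/-- Capacitability of analytic sets: an analytic set contains compact sets of measure close to its outer
measure. This stands in for the universal measurability of analytic sets. -/
theorem analyticSet_exists_isCompact {Z : Type*} [TopologicalSpace Z] [MeasurableSpace Z]
    (μ : Measure Z) [μ.OuterRegular] {A : Set Z} (hA : AnalyticSet A) {c : ENNReal}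
    (hc : c < μ A) : ∃ K ⊆ A, IsCompact K ∧ c ≤ μ K := by
  rw [AnalyticSet] at hA
  rcases hA with rfl | ⟨f, hf, rfl⟩
  · simp at hc
  have hstep : ∀ (S : Set (ℕ → ℕ)) (j : ℕ), ∃ v : ℕ, c < μ (f '' S) →
      c < μ (f '' (S ∩ {x | x j ≤ v})) := by
    intro S j
    by_cases h : c < μ (f '' S)
    · have hU : f '' S = ⋃ v : ℕ, f '' (S ∩ {x | x j ≤ v}) := by
        rw [← Set.image_iUnion, ← Set.inter_iUnion]
        congr 1
        refine (Set.inter_eq_left.mpr fun x _ => ?_).symm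
        exact Set.mem_iUnion.mpr ⟨x j, le_refl (x j)⟩
      have hmono : Monotone fun v : ℕ => f '' (S ∩ {x | x j ≤ v}) := fun v v' hv =>
        Set.image_mono (Set.inter_subset_inter_right _ fun x (hx : x j ≤ v) => hx.trans hv)
      rw [hU, hmono.measure_iUnion, lt_iSup_iff] at h
      obtain ⟨v, hv⟩ := h
      exact ⟨v, fun _ => hv⟩
    · exact ⟨0, fun h' => absurd h' h⟩
  choose v hv using hstep
  let S : ℕ → Set (ℕ → ℕ) := fun j =>
    Nat.rec Set.univ (fun j S => S ∩ {x | x j ≤ v S j}) j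
  have hS0 : S 0 = Set.univ := rfl
  have hSs : ∀ j, S (j + 1) = S j ∩ {x | x j ≤ v (S j) j} := fun j => rfl
  let N : ℕ → ℕ := fun j => v (S j) j
  have hSmem : ∀ j x, x ∈ S j ↔ ∀ i < j, x i ≤ N i := by
    intro j x
    induction j with
    | zero => simp [hS0]
    | succ j ih =>
      rw [hSs, Set.mem_inter_iff, ih]
      constructor
      · rintro ⟨h1, h2⟩ i hi
        rcases Nat.lt_succ_iff_lt_or_eq.mp hi with h | rfl
        · exact h1 i h
        · exact h2
      · exact fun h => ⟨fun i hi => h i (by omega), h j (by omega)⟩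
  have hSc : ∀ j, c < μ (f '' S j) := by
    intro j
    induction j with
    | zero => rwa [hS0, Set.image_univ]
    | succ j ih => rw [hSs]; exact hv _ _ ih
  let K₀ : Set (ℕ → ℕ) := Set.pi Set.univ fun i => Set.Iic (N i)
  have hK₀ : IsCompact K₀ := isCompact_univ_pi fun i => (Set.finite_Iic (N i)).isCompact
  refine ⟨f '' K₀, Set.image_subset_range _ _, hK₀.image hf, ?_⟩
  by_contra hlt
  obtain ⟨U, hKU, hUo, hUc⟩ := (f '' K₀).exists_isOpen_lt_of_lt c (not_le.mp hlt)
  have hx : ∀ j, ∃ x ∈ S j, f x ∉ U := by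
    intro j
    by_contra! h
    exact absurd (hSc j) (not_lt.mpr ((measure_mono (Set.image_subset_iff.mpr h)).trans hUc.le))
  choose x hxS hxU using hx
  obtain ⟨z, hz, φ, hφ, hlim⟩ := hK₀.tendsto_subseq (x := fun j i => min (x j i) (N i))
    (fun j i _ => min_le_right (x j i) (N i))
  have hlim' : Filter.Tendsto (fun j => x (φ j)) Filter.atTop (nhds z) := by
    rw [tendsto_pi_nhds] at hlim ⊢
    intro i
    refine (hlim i).congr' ?_
    filter_upwards [Filter.eventually_gt_atTop i] with j hj
    exact min_eq_left ((hSmem _ _).mp (hxS (φ j)) i (hj.trans_le (hφ.id_le j)))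
  have : ∀ᶠ j in Filter.atTop, f (x (φ j)) ∈ U :=
    ((hf.tendsto z).comp hlim').eventually (hUo.mem_nhds (hKU ⟨z, hz, rfl⟩))
  obtain ⟨j, hj⟩ := this.exists
  exact hxU _ hj

/-! ### Double sampling -/

/-- The Hoeffding bound for a Rademacher sum, in counting form. -/
lemma card_signs_le {m : ℕ} (c : Fin m → ℝ) (hc : ∀ i, |c i| ≤ 1) :
    ((Finset.univ.filter fun σ : Fin m → Bool =>
      (m : ℝ) / 10 ≤ ∑ i, if σ i then -c i else c i).card : ℝ) ≤
      2 ^ m * Real.exp (-(m / 200)) := by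
  have h1 : ((Finset.univ.filter fun σ : Fin m → Bool =>
      (m : ℝ) / 10 ≤ ∑ i, if σ i then -c i else c i).card : ℝ) ≤
      ∑ σ : Fin m → Bool, Real.exp ((∑ i, if σ i then -c i else c i) / 10 - m / 100) := by
    rw [Finset.card_eq_sum_ones, Nat.cast_sum]
    refine (Finset.sum_le_sum (g := fun σ : Fin m → Bool =>
      Real.exp ((∑ i, if σ i then -c i else c i) / 10 - m / 100)) fun σ hσ => ?_).trans
      (Finset.sum_le_sum_of_subset_of_nonneg (Finset.filter_subset _ _)
        fun _ _ _ => (Real.exp_pos _).le)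
    have := (Finset.mem_filter.mp hσ).2
    rw [Nat.cast_one, ← Real.exp_zero]
    exact Real.exp_le_exp.mpr (by linarith)
  have h2 : ∑ σ : Fin m → Bool, Real.exp ((∑ i, if σ i then -c i else c i) / 10 - m / 100) =
      (∏ i : Fin m, (2 * Real.cosh (c i / 10))) * Real.exp (-(m / 100)) := by
    have : ∀ i : Fin m, 2 * Real.cosh (c i / 10) =
        ∑ β : Bool, Real.exp ((if β then -c i else c i) / 10) := by
      intro i
      rw [Real.cosh_eq, Fintype.sum_bool, if_pos rfl, if_neg (by simp), neg_div]
      ring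
    simp_rw [this]
    rw [Finset.prod_univ_sum, Fintype.piFinset_univ, Finset.sum_mul]
    refine Finset.sum_congr rfl fun σ _ => ?_
    rw [← Real.exp_sum, ← Real.exp_add, Finset.sum_div]
    congr 1
  have h3 : ∏ i : Fin m, (2 * Real.cosh (c i / 10)) ≤ (2 * Real.exp (1 / 200)) ^ m := by
    have : (2 * Real.exp (1 / 200)) ^ m = ∏ _i : Fin m, (2 * Real.exp (1 / 200)) := by simp
    rw [this]
    refine Finset.prod_le_prod (fun i _ => by have := Real.cosh_pos (c i / 10); positivity)
      fun i _ => ?_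
    refine mul_le_mul_of_nonneg_left ((Real.cosh_le_exp_half_sq _).trans
      (Real.exp_le_exp.mpr ?_)) two_pos.le
    have := (sq_le_one_iff_abs_le_one (c i)).mpr (hc i)
    rw [div_pow]
    linarith
  refine (h1.trans (h2.le.trans (mul_le_mul_of_nonneg_right h3 (Real.exp_pos _).le))).trans
    (le_of_eq ?_)
  rw [mul_pow, ← Real.exp_nat_mul, mul_assoc, ← Real.exp_add]
  congr 2
  ring

section
variable {Ω Y : Type*} {m : ℕ}

/-- The double samples `q` that have a concept `y` hit by at most half of the first sample but by
at least three fifths of the second one. -/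
def discrepantSet (G : Set (Y × Ω)) (m : ℕ) : Set (Fin m → Ω × Ω) :=
  {q | ∃ y, ∑ i, G.indicator (1 : Y × Ω → ℝ) (y, (q i).1) ≤ (m : ℝ) / 2 ∧
    3 * (m : ℝ) / 5 ≤ ∑ i, G.indicator (1 : Y × Ω → ℝ) (y, (q i).2)}

/-- Exchange the two samples at the positions where `σ` is true. -/
def swapAt (σ : Fin m → Bool) (q : Fin m → Ω × Ω) : Fin m → Ω × Ω :=
  fun i => if σ i then (q i).swap else q i

/-- Among the `2 ^ m` swaps of a double sample, few are discrepant: union bound over the at most `B₀`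
traces on the `2 m` points, with the Hoeffding bound for each trace. -/
lemma card_swaps_le (G : Set (Y × Ω)) (B₀ : ℕ)
    (hB₀ : ∀ (q : Fin m × Bool → Ω) (B : Finset (Finset (Fin m × Bool))),
      (∀ T ∈ B, ∃ y, ∀ i, i ∈ T ↔ (y, q i) ∈ G) → B.card ≤ B₀)
    (q : Fin m → Ω × Ω) (S : Finset (Fin m → Bool))
    (hS : ∀ σ ∈ S, swapAt σ q ∈ discrepantSet G m) :
    (S.card : ℝ) ≤ B₀ * (2 ^ m * Real.exp (-(m / 200))) := by
  classical
  let q' : Fin m × Bool → Ω := fun z => if z.2 then (q z.1).2 else (q z.1).1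
  let B : Finset (Finset (Fin m × Bool)) :=
    Finset.univ.filter fun T => ∃ y, ∀ i, i ∈ T ↔ (y, q' i) ∈ G
  let c : Finset (Fin m × Bool) → Fin m → ℝ := fun T i =>
    (if (i, true) ∈ T then 1 else 0) - (if (i, false) ∈ T then 1 else 0)
  let S' : Finset (Fin m × Bool) → Finset (Fin m → Bool) := fun T =>
    Finset.univ.filter fun σ => (m : ℝ) / 10 ≤ ∑ i, if σ i then -c T i else c T i
  have hsub : S ⊆ B.biUnion S' := by
    intro σ hσ
    obtain ⟨y, h1, h2⟩ := hS σ hσ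
    refine Finset.mem_biUnion.mpr ⟨Finset.univ.filter fun i => (y, q' i) ∈ G, ?_, ?_⟩
    · exact Finset.mem_filter.mpr ⟨Finset.mem_univ _, y, fun i => by simp⟩
    · refine Finset.mem_filter.mpr ⟨Finset.mem_univ _, ?_⟩
      have h3 : ∑ i, (if σ i then -c (Finset.univ.filter fun i => (y, q' i) ∈ G) i
          else c (Finset.univ.filter fun i => (y, q' i) ∈ G) i) =
          ∑ i, G.indicator (1 : Y × Ω → ℝ) (y, (swapAt σ q i).2) -
          ∑ i, G.indicator (1 : Y × Ω → ℝ) (y, (swapAt σ q i).1) := by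
        rw [← Finset.sum_sub_distrib]
        refine Finset.sum_congr rfl fun i _ => ?_
        cases h : σ i <;> simp [c, q', swapAt, h, Set.indicator_apply]
      rw [h3]
      linarith
  have hcard : ∀ T, ((S' T).card : ℝ) ≤ 2 ^ m * Real.exp (-(m / 200)) := by
    intro T
    refine card_signs_le (c T) fun i => ?_
    simp only [c]
    split_ifs <;> simp
  have hB : (B.card : ℝ) ≤ B₀ := by
    exact_mod_cast hB₀ q' B fun T hT => (Finset.mem_filter.mp hT).2
  have h4 : (S.card : ℝ) ≤ ∑ T ∈ B, ((S' T).card : ℝ) := by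
    exact_mod_cast (Finset.card_le_card hsub).trans Finset.card_biUnion_le
  refine h4.trans ((Finset.sum_le_card_nsmul _ _ _ fun T _ => hcard T).trans ?_)
  rw [nsmul_eq_mul]
  exact mul_le_mul_of_nonneg_right hB (by positivity)

lemma measurePreserving_swapAt [MeasurableSpace Ω] (μ : Measure Ω) [IsProbabilityMeasure μ]
    (σ : Fin m → Bool) :
    MeasurePreserving (swapAt σ) (Measure.pi fun _ : Fin m => μ.prod μ)
      (Measure.pi fun _ : Fin m => μ.prod μ) := by
  refine measurePreserving_pi (f := fun i (z : Ω × Ω) => if σ i then z.swap else z) _ _ fun i => ?_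
  cases σ i
  · exact MeasurePreserving.id (μ.prod μ)
  · simpa using ⟨measurable_swap, Measure.prod_swap⟩

/-- **Symmetrization**: a measurable set of discrepant double samples is small, since on each orbit
of the swaps only a small fraction of the points is discrepant. -/
lemma measure_discrepant_le [MeasurableSpace Ω] (μ : Measure Ω) [IsProbabilityMeasure μ]
    (G : Set (Y × Ω)) (B₀ : ℕ)
    (hB₀ : ∀ (q : Fin m × Bool → Ω) (B : Finset (Finset (Fin m × Bool))),
      (∀ T ∈ B, ∃ y, ∀ i, i ∈ T ↔ (y, q i) ∈ G) → B.card ≤ B₀)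
    (K : Set (Fin m → Ω × Ω)) (hK : MeasurableSet K) (hKG : K ⊆ discrepantSet G m) :
    (Measure.pi fun _ : Fin m => μ.prod μ) K ≤ ENNReal.ofReal (B₀ * Real.exp (-(m / 200))) := by
  classical
  set ν := Measure.pi fun _ : Fin m => μ.prod μ with hν
  have h1 : ∑ σ : Fin m → Bool, ν (swapAt σ ⁻¹' K) = 2 ^ m * ν K := by
    have : ∀ σ : Fin m → Bool, ν (swapAt σ ⁻¹' K) = ν K := fun σ =>
      (measurePreserving_swapAt μ σ).measure_preimage hK.nullMeasurableSet
    simp [this]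
  have h2 : ∑ σ : Fin m → Bool, ν (swapAt σ ⁻¹' K) =
      ∫⁻ q, ∑ σ : Fin m → Bool, (swapAt σ ⁻¹' K).indicator 1 q ∂ν := by
    have hm : ∀ σ : Fin m → Bool, MeasurableSet (swapAt σ ⁻¹' K) := fun σ =>
      (measurePreserving_swapAt μ σ).measurable hK
    rw [lintegral_finsetSum _ fun σ _ => measurable_one.indicator (hm σ)]
    exact Finset.sum_congr rfl fun σ _ => (lintegral_indicator_one (hm σ)).symm
  have h3 : ∀ q, ∑ σ : Fin m → Bool, (swapAt σ ⁻¹' K).indicator (1 : (Fin m → Ω × Ω) → ENNReal) q ≤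
      ENNReal.ofReal (B₀ * (2 ^ m * Real.exp (-(m / 200)))) := by
    intro q
    have : ∑ σ : Fin m → Bool, (swapAt σ ⁻¹' K).indicator (1 : (Fin m → Ω × Ω) → ENNReal) q =
        ((Finset.univ.filter fun σ : Fin m → Bool => swapAt σ q ∈ K).card : ENNReal) := by
      simp [Set.indicator_apply]
    rw [this, ← ENNReal.ofReal_natCast]
    exact ENNReal.ofReal_le_ofReal (card_swaps_le G B₀ hB₀ q _ fun σ hσ =>
      hKG (Finset.mem_filter.mp hσ).2)
  have h4 : 2 ^ m * ν K ≤ ENNReal.ofReal (B₀ * (2 ^ m * Real.exp (-(m / 200)))) := by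
    rw [← h1, h2]
    refine (lintegral_mono h3).trans ?_
    simp [hν]
  have h5 : ENNReal.ofReal (B₀ * (2 ^ m * Real.exp (-(m / 200)))) =
      2 ^ m * ENNReal.ofReal (B₀ * Real.exp (-(m / 200))) := by
    rw [mul_left_comm, ENNReal.ofReal_mul (by positivity), ENNReal.ofReal_pow two_pos.le]
    simp
  rw [h5] at h4
  exact (ENNReal.mul_le_mul_iff_right (by simp) (by simp)).mp h4

open ProbabilityTheory in
/-- By Chebyshev, a set of measure at least `2 / 3` is hit by three fifths of a sample with probability
at least `1 / 2`. The threshold `113` comes from `(m / 4) / (m / 15) ^ 2 ≤ 1 / 2`. -/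
lemma measure_sample_ge [MeasurableSpace Ω] (μ : Measure Ω) [IsProbabilityMeasure μ]
    (A : Set Ω) (hA : MeasurableSet A) (hμA : 2 / 3 ≤ μ A) (hm : 113 ≤ m) :
    1 / 2 ≤ (Measure.pi fun _ : Fin m => μ)
      {r | 3 * (m : ℝ) / 5 ≤ ∑ i, A.indicator (1 : Ω → ℝ) (r i)} := by
  set ν := Measure.pi fun _ : Fin m => μ with hν
  have hX : Measurable (A.indicator (1 : Ω → ℝ)) := measurable_one.indicator hA
  have hb : ∀ ω, A.indicator (1 : Ω → ℝ) ω ∈ Set.Icc (0 : ℝ) 1 := fun ω => by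
    by_cases h : ω ∈ A <;> simp [h]
  have hL : MemLp (A.indicator (1 : Ω → ℝ)) 2 μ :=
    memLp_of_bounded (Filter.Eventually.of_forall hb) hX.aestronglyMeasurable 2
  let S : (Fin m → Ω) → ℝ := ∑ i, fun r => A.indicator (1 : Ω → ℝ) (r i)
  have hSa : ∀ r, S r = ∑ i, A.indicator (1 : Ω → ℝ) (r i) := fun r => by simp [S]
  have hLi : ∀ i : Fin m, MemLp (fun r : Fin m → Ω => A.indicator (1 : Ω → ℝ) (r i)) 2 ν := fun i =>
    hL.comp_measurePreserving (measurePreserving_eval (fun _ : Fin m => μ) i)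
  have hSL : MemLp S 2 ν := memLp_finsetSum' _ fun i _ => hLi i
  have hvar : Var[S; ν] ≤ m / 4 := by
    have : Var[S; ν] = ∑ i : Fin m, Var[A.indicator (1 : Ω → ℝ); μ] :=
      variance_sum_pi (μ := fun _ : Fin m => μ) (X := fun _ => A.indicator (1 : Ω → ℝ)) fun _ => hL
    rw [this]
    have h := variance_le_sq_of_bounded (Filter.Eventually.of_forall hb) hX.aemeasurable (μ := μ)
    simp only [Finset.sum_const, Finset.card_univ, Fintype.card_fin, nsmul_eq_mul]
    have hm0 : (0 : ℝ) ≤ m := by positivity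
    nlinarith
  have hμr : 2 / 3 ≤ μ.real A := by
    rw [measureReal_def]
    have := (ENNReal.toReal_le_toReal (ENNReal.div_ne_top (by simp) (by simp))
      (measure_ne_top μ A)).mpr hμA
    simpa using this
  have hmean : 2 * (m : ℝ) / 3 ≤ ∫ r, S r ∂ν := by
    simp_rw [hSa]
    rw [integral_finsetSum _ fun i _ => (hLi i).integrable (by norm_num)]
    have : ∀ i : Fin m, ∫ r, A.indicator (1 : Ω → ℝ) (r i) ∂ν = μ.real A := by
      intro i
      have h := (measurePreserving_eval (fun _ : Fin m => μ) i).map_eq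
      rw [← integral_indicator_one hA, ← h, integral_map
        (measurePreserving_eval (fun _ : Fin m => μ) i).measurable.aemeasurable
        hX.aestronglyMeasurable]
    simp_rw [this]
    simp only [Finset.sum_const, Finset.card_univ, Fintype.card_fin, nsmul_eq_mul]
    have hm0 : (0 : ℝ) ≤ m := by positivity
    nlinarith
  have hmpos : (113 : ℝ) ≤ m := by exact_mod_cast hm
  have hcheb := meas_ge_le_variance_div_sq hSL (c := m / 15) (by linarith)
  have hbound : ENNReal.ofReal (Var[S; ν] / (m / 15) ^ 2) ≤ 1 / 2 := by
    rw [show (1 / 2 : ENNReal) = ENNReal.ofReal (1 / 2) by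
      rw [ENNReal.ofReal_div_of_pos two_pos]; simp]
    refine ENNReal.ofReal_le_ofReal ?_
    rw [div_le_iff₀ (by positivity)]
    nlinarith
  have hmeas : MeasurableSet {r : Fin m → Ω | 3 * (m : ℝ) / 5 ≤ ∑ i, A.indicator (1 : Ω → ℝ) (r i)} := by
    refine measurableSet_le measurable_const (Finset.measurable_sum _ fun i _ => ?_)
    exact hX.comp (measurable_pi_apply i)
  have hcompl : ν {r : Fin m → Ω | 3 * (m : ℝ) / 5 ≤ ∑ i, A.indicator (1 : Ω → ℝ) (r i)}ᶜ ≤ 1 / 2 := by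
    refine (measure_mono ?_).trans (hcheb.trans hbound)
    intro r hr
    have hr' : ∑ i, A.indicator (1 : Ω → ℝ) (r i) < 3 * (m : ℝ) / 5 := not_le.mp hr
    change (m : ℝ) / 15 ≤ |S r - ∫ x, S x ∂ν|
    rw [hSa, abs_sub_comm]
    refine le_trans ?_ (le_abs_self _)
    linarith
  have htot := prob_add_prob_compl hmeas (μ := ν)
  by_contra hlt
  rw [not_le] at hlt
  have : ν _ + ν _ < 1 / 2 + 1 / 2 := ENNReal.add_lt_add_of_lt_of_le (by simp) hlt hcompl
  rw [htot, ENNReal.add_halves] at this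
  exact lt_irrefl _ this
end

/-! ### A uniform sample for a Borel family -/

section
set_option linter.unusedSectionVars false
variable {Ω Y : Type*} {m : ℕ}
variable [TopologicalSpace Ω] [PolishSpace Ω] [MeasurableSpace Ω] [BorelSpace Ω]
  [TopologicalSpace Y] [PolishSpace Y] [MeasurableSpace Y] [BorelSpace Y]

/-- The existential quantifier over `y` is a projection, so the discrepant set is analytic. -/
lemma analyticSet_discrepantSet {G : Set (Y × Ω)} (hG : MeasurableSet G) :
    AnalyticSet (discrepantSet G m) := by
  have hI : Measurable (G.indicator (1 : Y × Ω → ℝ)) := measurable_one.indicator hG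
  have hM : MeasurableSet {z : Y × (Fin m → Ω × Ω) |
      ∑ i, G.indicator (1 : Y × Ω → ℝ) (z.1, (z.2 i).1) ≤ (m : ℝ) / 2 ∧
      3 * (m : ℝ) / 5 ≤ ∑ i, G.indicator (1 : Y × Ω → ℝ) (z.1, (z.2 i).2)} := by
    refine MeasurableSet.inter
      (measurableSet_le (Finset.measurable_sum _ fun i _ => hI.comp ?_) measurable_const)
      (measurableSet_le measurable_const (Finset.measurable_sum _ fun i _ => hI.comp ?_)) <;>
    fun_prop
  have := hM.analyticSet.image_of_continuous continuous_snd
  convert this using 1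
  ext q
  constructor
  · rintro ⟨y, hy⟩; exact ⟨(y, q), hy, rfl⟩
  · rintro ⟨⟨y, q'⟩, hy, rfl⟩; exact ⟨y, hy⟩

/-- If every sample fails for some `y`, a second independent sample exposes the discrepancy with
probability at least `1 / 2`. The discrepant set is replaced by a measurable superset to apply
Tonelli. -/
lemma measure_discrepantSet_ge {G : Set (Y × Ω)} (hG : MeasurableSet G)
    (μ : Measure Ω) [IsProbabilityMeasure μ] (hm : 113 ≤ m)
    (hbad : ∀ r : Fin m → Ω, ∃ y, 2 / 3 ≤ μ {ω | (y, ω) ∈ G} ∧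
      ∑ i, G.indicator (1 : Y × Ω → ℝ) (y, r i) ≤ (m : ℝ) / 2) :
    1 / 2 ≤ (Measure.pi fun _ : Fin m => μ.prod μ) (discrepantSet G m) := by
  set ν := Measure.pi fun _ : Fin m => μ.prod μ with hν
  set E := toMeasurable ν (discrepantSet G m) with hE
  have hEm : MeasurableSet E := measurableSet_toMeasurable _ _
  rw [← measure_toMeasurable, ← hE]
  let e := MeasurableEquiv.arrowProdEquivProdArrow Ω Ω (Fin m)
  have he : MeasurePreserving e.symm _ ν :=
    (measurePreserving_arrowProdEquivProdArrow Ω Ω (Fin m) (fun _ => μ) (fun _ => μ)).symm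
  rw [← he.measure_preimage hEm.nullMeasurableSet, Measure.prod_apply (e.symm.measurable hEm)]
  have hlow : ∀ r : Fin m → Ω, 1 / 2 ≤
      (Measure.pi fun _ : Fin m => μ) (Prod.mk r ⁻¹' (e.symm ⁻¹' E)) := by
    intro r
    obtain ⟨y, hy, hr⟩ := hbad r
    have hA : MeasurableSet {ω | (y, ω) ∈ G} := measurable_prodMk_left hG
    refine (measure_sample_ge μ _ hA hy hm).trans (measure_mono fun r' hr' => ?_)
    exact subset_toMeasurable ν _ ⟨y, hr, hr'⟩
  calc (1 / 2 : ENNReal) = ∫⁻ _r : Fin m → Ω, 1 / 2 ∂(Measure.pi fun _ : Fin m => μ) := by simp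
    _ ≤ _ := lintegral_mono hlow

/-- A uniform one-sided law of large numbers for a Borel family of sets whose trace on any double
sample has at most `B₀` elements. -/
theorem exists_uniform_sample {G : Set (Y × Ω)} (hG : MeasurableSet G)
    (μ : Measure Ω) [IsProbabilityMeasure μ] (hm : 113 ≤ m) (B₀ : ℕ)
    (hB₀ : ∀ (q : Fin m × Bool → Ω) (B : Finset (Finset (Fin m × Bool))),
      (∀ T ∈ B, ∃ y, ∀ i, i ∈ T ↔ (y, q i) ∈ G) → B.card ≤ B₀)
    (hsmall : B₀ * Real.exp (-(m / 200)) < 2 / 5) :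
    ∃ r : Fin m → Ω, ∀ y, 2 / 3 ≤ μ {ω | (y, ω) ∈ G} →
      (m : ℝ) / 2 < ∑ i, G.indicator (1 : Y × Ω → ℝ) (y, r i) := by
  by_contra! hbad
  have h1 := measure_discrepantSet_ge hG μ hm hbad
  have h25 : ENNReal.ofReal (2 / 5) < 1 / 2 := by
    rw [show (1 / 2 : ENNReal) = ENNReal.ofReal (1 / 2) by
      rw [ENNReal.ofReal_div_of_pos two_pos]; simp]
    exact (ENNReal.ofReal_lt_ofReal_iff (by norm_num)).mpr (by norm_num)
  obtain ⟨K, hK, hKc, hKμ⟩ := analyticSet_exists_isCompact _ (analyticSet_discrepantSet hG)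
    (h25.trans_le h1)
  have h2 := hKμ.trans (measure_discrepant_le μ G B₀ hB₀ K hKc.measurableSet hK)
  rw [ENNReal.ofReal_le_ofReal_iff (by positivity)] at h2
  linarith
end

/-! ### The sample size -/

lemma natCast_pow_two_le_exp (j : ℕ) : ((2 ^ j : ℕ) : ℝ) ≤ Real.exp j := by
  have h2 : (2 : ℝ) ≤ Real.exp 1 := by linarith [Real.exp_one_gt_d9]
  have := pow_le_pow_left₀ (by norm_num) h2 j
  rw [← Real.exp_nat_mul, mul_one] at this
  exact_mod_cast this

set_option maxHeartbeats 800000 in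
/-- A sample size proportional to `n² s (1 + log (b s))` makes the exponential gain of the
double-sampling argument beat the number of patterns on `2 m` sample points. -/
lemma patternBound_mul_exp_lt {n s b m : ℕ} (hn : 1 ≤ n) (hs : 1 ≤ s) (hb : 1 ≤ b)
    (hlo : 40000 * ((n : ℝ) ^ 2 * s * (1 + Real.log (b * s))) ≤ m)
    (hhi : (m : ℝ) ≤ 40001 * ((n : ℝ) ^ 2 * s * (1 + Real.log (b * s)))) :
    (patternBound n s b (m * 2) : ℝ) * Real.exp (-(m / 200)) < 2 / 5 := by
  have hn' : (1 : ℝ) ≤ n := by exact_mod_cast hn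
  have hs' : (1 : ℝ) ≤ s := by exact_mod_cast hs
  have hb' : (1 : ℝ) ≤ b := by exact_mod_cast hb
  have hbs : (1 : ℝ) ≤ b * s := by nlinarith
  set L : ℝ := 1 + Real.log (b * s) with hL
  have hL1 : 1 ≤ L := by linarith [Real.log_nonneg hbs]
  have hexpL : (b : ℝ) * s ≤ Real.exp L := by
    rw [hL, Real.exp_add, Real.exp_log (by linarith)]
    nlinarith [Real.add_one_le_exp (1 : ℝ)]
  set Z : ℝ := (n : ℝ) ^ 2 * s * L with hZ
  have hsL : (1 : ℝ) ≤ s * L := by nlinarith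
  have hnn : (n : ℝ) * n ≤ Z := by
    rw [hZ]; nlinarith [mul_le_mul_of_nonneg_left hsL (by positivity : (0 : ℝ) ≤ n * n)]
  have hns : (n : ℝ) * s ≤ Z := by
    have : (1 : ℝ) ≤ n * L := by nlinarith
    rw [hZ]; nlinarith [mul_le_mul_of_nonneg_left this (by positivity : (0 : ℝ) ≤ n * s)]
  have hnL : (n : ℝ) * L ≤ Z := by
    have : (1 : ℝ) ≤ n * s := by nlinarith
    rw [hZ]; nlinarith [mul_le_mul_of_nonneg_left this (by positivity : (0 : ℝ) ≤ n * L)]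
  have hnZ : (n : ℝ) ≤ Z := by nlinarith
  have hZ1 : 1 ≤ Z := by linarith
  have en : (n : ℝ) ≤ Real.exp n := by linarith [Real.add_one_le_exp (n : ℝ)]
  have es : (s : ℝ) ≤ Real.exp s := by linarith [Real.add_one_le_exp (s : ℝ)]
  have eL : L ≤ Real.exp L := by linarith [Real.add_one_le_exp L]
  -- the factor coming from the number of sample points
  have h1 : (m * 2 + 1 : ℝ) ≤ Real.exp (17 + (2 * n + s + L)) := by
    have hZexp : Z ≤ Real.exp (2 * n + s + L) := by
      have : Real.exp (2 * n + s + L) = Real.exp n ^ 2 * Real.exp s * Real.exp L := by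
        rw [Real.exp_add, Real.exp_add, ← Real.exp_nat_mul]; norm_num
      rw [this, hZ]
      gcongr
    have h17 : (2 ^ 17 : ℝ) ≤ Real.exp 17 := by
      have := natCast_pow_two_le_exp 17
      norm_num at this ⊢
      exact this
    rw [Real.exp_add]
    calc (m * 2 + 1 : ℝ) ≤ 2 ^ 17 * Z := by linarith
      _ ≤ _ := by gcongr
  -- the factor coming from the degree of the critical system
  have h2 : (((n + 2) * (s + 2) * (5 + 8 * b * (s * b + 1)) + 1 : ℕ) : ℝ) ≤
      Real.exp (8 + (n + 2 * L)) := by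
    have h8 : (2 ^ 8 : ℝ) ≤ Real.exp 8 := by
      have := natCast_pow_two_le_exp 8
      norm_num at this ⊢
      exact this
    have hd : ((n + 2 : ℝ) * (s + 2)) ≤ 9 * (n * s) := by nlinarith
    have hD : (5 + 8 * b * (s * b + 1) : ℝ) ≤ 21 * (b * (b * s)) := by
      have : (b : ℝ) ≤ b * (b * s) := by nlinarith
      nlinarith
    have hle : (((n + 2) * (s + 2) * (5 + 8 * b * (s * b + 1)) + 1 : ℕ) : ℝ) ≤
        2 ^ 8 * (n * (b * s) ^ 2) := by
      push_cast
      have h3 : ((n + 2 : ℝ) * (s + 2)) * (5 + 8 * b * (s * b + 1)) ≤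
          9 * (n * s) * (21 * (b * (b * s))) := by gcongr
      have h4 : (1 : ℝ) ≤ n * (b * s) ^ 2 := by nlinarith
      nlinarith
    rw [Real.exp_add, Real.exp_add]
    have : Real.exp (2 * L) = Real.exp L ^ 2 := by rw [← Real.exp_nat_mul]; norm_num
    rw [this]
    refine hle.trans ?_
    gcongr
  have hd : ((n + 2 : ℝ) * (s + 2)) ≤ 9 * (n * s) := by nlinarith
  have e1 : (n + 2 : ℝ) * (17 + (2 * n + s + L)) ≤ 63 * Z := by
    have : (n + 2 : ℝ) * (17 + (2 * n + s + L)) ≤ 3 * n * (17 + (2 * n + s + L)) := by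
      gcongr; linarith
    nlinarith
  have e2 : ((n + 2 : ℝ) * (s + 2)) * (8 + (n + 2 * L)) ≤ 99 * Z := by
    have h11 : 8 + (n + 2 * L) ≤ 11 * (n * L) := by
      have : n ≤ n * L := le_mul_of_one_le_right (by positivity) hL1
      have : L ≤ n * L := le_mul_of_one_le_left (by positivity) hn'
      linarith
    calc ((n + 2 : ℝ) * (s + 2)) * (8 + (n + 2 * L)) ≤ 9 * (n * s) * (11 * (n * L)) := by
          gcongr
      _ = 99 * Z := by rw [hZ]; ring
  have hmain : (patternBound n s b (m * 2) : ℝ) ≤ Real.exp (162 * Z) := by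
    have p1 : (m * 2 + 1 : ℝ) ^ (n + 2) ≤ Real.exp (63 * Z) := by
      calc (m * 2 + 1 : ℝ) ^ (n + 2) ≤ Real.exp (17 + (2 * n + s + L)) ^ (n + 2) := by gcongr
        _ ≤ _ := by
          rw [← Real.exp_nat_mul]
          refine Real.exp_le_exp.2 ?_
          push_cast; exact e1
    have p2 : (((n + 2) * (s + 2) * (5 + 8 * b * (s * b + 1)) + 1 : ℕ) : ℝ) ^
        ((n + 2) * (s + 2)) ≤ Real.exp (99 * Z) := by
      refine (pow_le_pow_left₀ (by positivity) h2 _).trans ?_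
      rw [← Real.exp_nat_mul]
      refine Real.exp_le_exp.2 ?_
      push_cast; exact e2
    have : (162 : ℝ) * Z = 63 * Z + 99 * Z := by ring
    rw [this, Real.exp_add, patternBound, Nat.cast_mul, Nat.cast_pow, Nat.cast_pow]
    refine mul_le_mul ?_ p2 (by positivity) (by positivity)
    push_cast
    exact p1
  calc (patternBound n s b (m * 2) : ℝ) * Real.exp (-(m / 200))
      ≤ Real.exp (162 * Z) * Real.exp (-(m / 200)) := by gcongr
    _ = Real.exp (162 * Z + -(m / 200)) := by rw [Real.exp_add]
    _ ≤ Real.exp (-1) := Real.exp_le_exp.2 (by linarith)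
    _ < 2 / 5 := by linarith [Real.exp_neg_one_lt_d9]

/-- **Derandomization of exactly computing semialgebraic circuits.** There is an absolute
constant `C > 0` such that: if a probabilistic `b`-semialgebraic circuit of size `s` with
`n` deterministic and `k` random inputs (distributed by a Borel probability measure `μ`)
computes `f : ℝⁿ → ℝ` with success probability at least `2/3` on every input, then there
are `m ≤ C·n²·s·(1 + ln(b·s))` assignments `r₁,…,r_m` to the random inputs such that on
every input `x` strictly more than `m/2` of the deterministic copies output `f(x)`. -/
theorem derandomize_exact_semialgebraic_circuits :
    ∃ C : ℝ, 0 < C ∧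
      ∀ (n k s b : ℕ) (hn : 1 ≤ n) (hk : 1 ≤ k) (hs : 1 ≤ s) (hb : 1 ≤ b)
        (F : (Fin n → ℝ) → (Fin k → ℝ) → ℝ)
        (circ : Fin s → (Fin (n + k) → ℝ) → ℝ),
        IsSACircuit (n + k) s b circ →
        (∀ (x : Fin n → ℝ) (r : Fin k → ℝ),
          F x r = circ ⟨s - 1, by omega⟩ (Fin.append x r)) →
        ∀ (μ : Measure (Fin k → ℝ)), IsProbabilityMeasure μ →
          ∀ f : (Fin n → ℝ) → ℝ,
            (∀ x : Fin n → ℝ, 2 / 3 ≤ μ {r : Fin k → ℝ | F x r = f x}) →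
            ∃ m : ℕ, 1 ≤ m ∧
              (m : ℝ) ≤ C * n ^ 2 * s * (1 + Real.log (b * s)) ∧
              ∃ r : Fin m → (Fin k → ℝ), ∀ x : Fin n → ℝ,
                m < 2 * Set.ncard {i : Fin m | F x (r i) = f x} := by
  refine ⟨40001, by norm_num, ?_⟩
  intro n k s b hn hk hs hb F circ hcirc hF μ hμ f hf
  have hn' : (1 : ℝ) ≤ n := by exact_mod_cast hn
  have hs' : (1 : ℝ) ≤ s := by exact_mod_cast hs
  have hb' : (1 : ℝ) ≤ b := by exact_mod_cast hb
  have hL : (1 : ℝ) ≤ 1 + Real.log (b * s) := by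
    linarith [Real.log_nonneg (by nlinarith : (1 : ℝ) ≤ b * s)]
  have hZ : (1 : ℝ) ≤ (n : ℝ) ^ 2 * s * (1 + Real.log (b * s)) :=
    one_le_mul_of_one_le_of_one_le
      (one_le_mul_of_one_le_of_one_le (one_le_pow₀ hn') hs') hL
  set m := ⌈40000 * ((n : ℝ) ^ 2 * s * (1 + Real.log (b * s)))⌉₊ with hm
  have hlo : 40000 * ((n : ℝ) ^ 2 * s * (1 + Real.log (b * s))) ≤ m := Nat.le_ceil _
  have hhi : (m : ℝ) ≤ 40001 * ((n : ℝ) ^ 2 * s * (1 + Real.log (b * s))) := by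
    have : (m : ℝ) < _ := Nat.ceil_lt_add_one (by positivity)
    linarith
  have hm113 : 113 ≤ m := by
    have : (113 : ℝ) ≤ m := by linarith
    exact_mod_cast this
  refine ⟨m, by omega, by linarith, ?_⟩
  -- The target value is an extra parameter: `G` does not mention `f`, which may be
  -- non-measurable.
  let G : Set (((Fin n → ℝ) × ℝ) × (Fin k → ℝ)) :=
    {z | circ ⟨s - 1, by omega⟩ (Fin.append z.1.1 z.2) = z.1.2}
  have hG : MeasurableSet G := by
    refine measurableSet_eq_fun ?_ (by fun_prop)
    exact (hcirc.measurable _).comp (measurable_fin_append.comp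
      (by fun_prop : Measurable fun z : ((Fin n → ℝ) × ℝ) × (Fin k → ℝ) => (z.1.1, z.2)))
  have : Nonempty (Fin m × Bool) := ⟨(⟨0, by omega⟩, true)⟩
  obtain ⟨r, hr⟩ := exists_uniform_sample hG μ hm113 (patternBound n s b (m * 2))
    (fun q B hB => by
      have := card_patterns_le hb hcirc ⟨s - 1, by omega⟩ q B
        (fun T hT => by
          obtain ⟨y, hy⟩ := hB T hT
          exact ⟨y.1, y.2, hy⟩)
      simpa using this)
    (patternBound_mul_exp_lt hn hs hb hlo hhi)
  refine ⟨r, fun x => ?_⟩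
  have h := hr (x, f x) (by simpa [G, hF] using hf x)
  have hcount : ∑ i, G.indicator (1 : ((Fin n → ℝ) × ℝ) × (Fin k → ℝ) → ℝ) ((x, f x), r i) =
      (Set.ncard {i : Fin m | F x (r i) = f x} : ℝ) := by
    classical
    rw [Set.ncard_eq_toFinset_card']
    simp [Set.indicator_apply, G, hF]
  rw [hcount] at h
  have : (m : ℝ) < 2 * (Set.ncard {i : Fin m | F x (r i) = f x} : ℝ) := by linarith
  exact_mod_cast this
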